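/- arXiv:2407.16865 — 5 statements merged into one kernel-verified Lean document; each statement's English description precedes it below -/
import Mathlib

section
/- Suppose f is such a piecewise-C¹ one-parameter family with β > 0, a_L > 1, and 0 < a_R < 1. Let s_L > 1 and 0 < s_R < 1 be arbitrary, and let ν(μ) = f(0;μ). Then there exist μ₀ > 0 and open neighbourhoods N, M(μ), and P(μ) of 0 such that for all μ ∈ (−μ₀, μ₀), the map f(·;μ) on N, the piecewise-linear map y ↦ ν(μ) + s_L y for y ≤ 0, y ↦ ν(μ) + s_R y for y ≥ 0 on M(μ), and the quadratic map y ↦ ν(μ) + y − y² on P(μ) are all topologically conjugate to one another. -/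
/-- The piecewise-smooth family: `f(x;μ) = f_L(x;μ)` for `x ≤ 0` and `f_R(x;μ)` for `x > 0`
(these agree when the continuity condition `f_L(0;μ) = f_R(0;μ)` holds). -/
noncomputable def pwFam (fL fR : ℝ → ℝ → ℝ) (μ : ℝ) : ℝ → ℝ :=
  fun x => if x ≤ 0 then fL x μ else fR x μ

/-- `h` is a homeomorphism from `U` onto `V`. -/
def IsHomeoOn (h : ℝ → ℝ) (U V : Set ℝ) : Prop :=
  Set.BijOn h U V ∧ ContinuousOn h U ∧
    ∃ hinv : ℝ → ℝ, Set.InvOn hinv h U V ∧ ContinuousOn hinv V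

/-- `h` intertwines `f` and `g` on `U`: `h (f x) = g (h x)` for all `x ∈ U` with `f x ∈ U`. -/
def ConjRelOn (h f g : ℝ → ℝ) (U : Set ℝ) : Prop :=
  ∀ x ∈ U, f x ∈ U → h (f x) = g (h x)

/-- `f` on `U` is topologically conjugate to `g` on `V`. -/
def TopConjOn (f g : ℝ → ℝ) (U V : Set ℝ) : Prop :=
  ∃ h : ℝ → ℝ, IsHomeoOn h U V ∧ ConjRelOn h f g U

lemma pow_bdd_idx (F : ℝ ≃o ℝ) (S : Set ℝ) (hS : S.OrdConnected)
    (FS : ∀ x, F x ∈ S ↔ x ∈ S) (hF : ∀ x ∈ S, F x < x) (x0 : ℝ) (hx0 : x0 ∈ S) :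
    (∀ n : ℤ, (F ^ n) x0 ∈ S) ∧ (StrictAnti fun n : ℤ => (F ^ n) x0) ∧
    ∀ x ∈ S, ∃ n : ℤ, (F ^ (n + 1)) x0 < x ∧ x ≤ (F ^ n) x0 := by
  have hsucc : ∀ (n : ℤ) (x : ℝ), (F ^ (n + 1)) x = F ((F ^ n) x) := by
    intro n x
    rw [add_comm, zpow_add, zpow_one]; rfl
  have hmem : ∀ n : ℤ, (F ^ n) x0 ∈ S := by
    intro n
    induction n using Int.induction_on with
    | zero => simpa using hx0
    | succ n ih => rw [hsucc]; exact (FS _).2 ih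
    | pred n ih =>
      rw [← FS, ← hsucc]
      simpa using ih
  have hanti : StrictAnti fun n : ℤ => (F ^ n) x0 := by
    apply strictAnti_int_of_succ_lt
    intro n
    simp only [hsucc]
    exact hF _ (hmem n)
  refine ⟨hmem, hanti, ?_⟩
  intro x hx
  have h1 : ∃ n : ℤ, (F ^ n) x0 < x := by
    by_contra! hc
    have hb : BddBelow (Set.range fun n : ℤ => (F ^ n) x0) := ⟨x, by rintro _ ⟨n, rfl⟩; exact hc n⟩
    have hLS : (⨅ n : ℤ, (F ^ n) x0) ∈ S := by
      refine hS.out hx hx0 ⟨le_ciInf hc, ?_⟩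
      simpa using ciInf_le hb 0
    have := hF _ hLS
    rw [OrderIso.map_ciInf F hb] at this
    have e : (⨅ n : ℤ, F ((F ^ n) x0)) = ⨅ n : ℤ, (F ^ n) x0 := by
      rw [← (Equiv.addRight (1:ℤ)).iInf_comp (g := fun n : ℤ => (F ^ n) x0)]
      simp [hsucc]
    exact absurd this (by rw [e]; exact lt_irrefl _)
  have h2 : ∃ n : ℤ, x ≤ (F ^ n) x0 := by
    by_contra! hc
    have hb : BddAbove (Set.range fun n : ℤ => (F ^ n) x0) :=
      ⟨x, by rintro _ ⟨n, rfl⟩; exact (hc n).le⟩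
    have hLS : (⨆ n : ℤ, (F ^ n) x0) ∈ S := by
      refine hS.out hx0 hx ⟨?_, ciSup_le fun n => (hc n).le⟩
      simpa using le_ciSup hb 0
    have := hF _ hLS
    rw [OrderIso.map_ciSup F hb] at this
    have e : (⨆ n : ℤ, F ((F ^ n) x0)) = ⨆ n : ℤ, (F ^ n) x0 := by
      rw [← (Equiv.addRight (1:ℤ)).iSup_comp (g := fun n : ℤ => (F ^ n) x0)]
      simp [hsucc]
    exact absurd this (by rw [e]; exact lt_irrefl _)
  obtain ⟨b, hb⟩ := h1
  obtain ⟨n, hn, hmax⟩ := Int.exists_greatest_of_bdd (P := fun n : ℤ => x ≤ (F ^ n) x0)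
    ⟨b, fun z hz => by
      by_contra! hlt
      exact absurd (hanti hlt) (not_lt.2 (hb.le.trans hz))⟩ h2
  refine ⟨n, ?_, hn⟩
  by_contra! hlt
  have := hmax _ hlt
  omega

lemma exists_affine (a b c d : ℝ) (h : a < b) (h' : c < d) :
    ∃ φ : ℝ ≃o ℝ, φ a = c ∧ φ b = d := by
  have hba : 0 < b - a := by linarith
  have hdc : 0 < d - c := by linarith
  have hs : 0 < (d - c) / (b - a) := by positivity
  let φ : ℝ → ℝ := fun x => c + (d - c) / (b - a) * (x - a)
  have hm : StrictMono φ := by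
    intro x y hxy
    have := mul_lt_mul_of_pos_left hxy hs
    simp only [φ]; linarith
  have hsur : Function.Surjective φ := by
    intro y
    refine ⟨a + (y - c) * (b - a) / (d - c), ?_⟩
    simp only [φ]; field_simp; ring
  refine ⟨hm.orderIsoOfSurjective φ hsur, ?_, ?_⟩
  · simp [φ]
  · simp [φ]; field_simp; ring

def Cj (F G : ℝ → ℝ) (S T : Set ℝ) (h : ℝ → ℝ) : Prop :=
  StrictMonoOn h S ∧ h '' S = T ∧ ∀ x ∈ S, F x ∈ S ∧ h (F x) = G (h x)

lemma core (F G : ℝ ≃o ℝ) (S T : Set ℝ) (hS : S.OrdConnected) (hT : T.OrdConnected)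
    (FS : ∀ x, F x ∈ S ↔ x ∈ S) (GT : ∀ x, G x ∈ T ↔ x ∈ T)
    (hF : ∀ x ∈ S, F x < x) (hG : ∀ x ∈ T, G x < x) (x0 y0 : ℝ) (hx0 : x0 ∈ S) (hy0 : y0 ∈ T) :
    ∃ h, Cj F G S T h ∧ h x0 = y0 := by
  obtain ⟨Fm, Fa, Fi⟩ := pow_bdd_idx F S hS FS hF x0 hx0
  obtain ⟨Gm, Ga, Gi⟩ := pow_bdd_idx G T hT GT hG y0 hy0
  obtain ⟨φ, φ1, φ0⟩ := exists_affine (F x0) x0 (G y0) y0 (hF _ hx0) (hG _ hy0)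
  have hsucc : ∀ (H : ℝ ≃o ℝ) (n : ℤ) (x : ℝ), (H ^ (n + 1)) x = H ((H ^ n) x) := by
    intro H n x
    rw [add_comm, zpow_add, zpow_one]; rfl
  have hsucc' : ∀ (H : ℝ ≃o ℝ) (n : ℤ) (x : ℝ), (H ^ (n + 1)) x = (H ^ n) (H x) := by
    intro H n x
    rw [zpow_add, zpow_one]; rfl
  have hinv : ∀ (H : ℝ ≃o ℝ) (n : ℤ) (x : ℝ), (H ^ (-n)) ((H ^ n) x) = x := by
    intro H n x
    rw [← RelIso.mul_apply, ← zpow_add]; simp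
  have hinv' : ∀ (H : ℝ ≃o ℝ) (n : ℤ) (x : ℝ), (H ^ n) ((H ^ (-n)) x) = x := by
    intro H n x
    rw [← RelIso.mul_apply, ← zpow_add]; simp
  choose! idx hi1 hi2 using Fi
  let k : ℤ → ℝ → ℝ := fun n x => (G ^ n) (φ ((F ^ (-n)) x))
  have kmono : ∀ n, StrictMono (k n) := fun n =>
    (G ^ n).strictMono.comp (φ.strictMono.comp (F ^ (-n)).strictMono)
  have k0 : ∀ n, k n ((F ^ n) x0) = (G ^ n) y0 := by
    intro n; simp only [k, hinv, φ0]
  have k1 : ∀ n, k n ((F ^ (n + 1)) x0) = (G ^ (n + 1)) y0 := by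
    intro n; simp only [k, hsucc', hinv, φ1]
  have uniq : ∀ x ∈ S, ∀ n : ℤ, (F ^ (n + 1)) x0 < x → x ≤ (F ^ n) x0 → idx x = n := by
    intro x hx n h1 h2
    have a1 := Fa.lt_iff_gt.1 (h1.trans_le (hi2 x hx))
    have a2 := Fa.lt_iff_gt.1 ((hi1 x hx).trans_le h2)
    omega
  have hk : ∀ x ∈ S, (G ^ (idx x + 1)) y0 < k (idx x) x ∧ k (idx x) x ≤ (G ^ (idx x)) y0 := by
    intro x hx
    exact ⟨(k1 _).symm.trans_lt (kmono _ (hi1 x hx)), ((kmono _).monotone (hi2 x hx)).trans_eq (k0 _)⟩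
  refine ⟨fun x => k (idx x) x, ⟨?_, ?_, ?_⟩, ?_⟩
  · intro x hx x' hx' hlt
    have a1 := Fa.lt_iff_gt.1 ((hi1 x hx).trans (hlt.trans_le (hi2 x' hx')))
    rcases (show idx x' ≤ idx x by omega).eq_or_lt with e | e
    · simp only [e]; exact kmono _ hlt
    · have : (G ^ (idx x)) y0 ≤ (G ^ (idx x' + 1)) y0 := Ga.antitone (by omega)
      exact ((hk x hx).2.trans this).trans_lt (hk x' hx').1
  · ext y
    constructor
    · rintro ⟨x, hx, rfl⟩
      exact hT.out (Gm _) (Gm _) ⟨(hk x hx).1.le, (hk x hx).2⟩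
    · intro hy
      obtain ⟨n, h1, h2⟩ := Gi y hy
      let x := (F ^ n) (φ.symm ((G ^ (-n)) y))
      have hkx : k n x = y := by simp only [k, x, hinv, OrderIso.apply_symm_apply, hinv']
      have c1 : (F ^ (n + 1)) x0 < x := by
        rw [← (kmono n).lt_iff_lt, hkx, k1]; exact h1
      have c2 : x ≤ (F ^ n) x0 := by
        rw [← (kmono n).le_iff_le, hkx, k0]; exact h2
      have hx : x ∈ S := hS.out (Fm _) (Fm _) ⟨c1.le, c2⟩
      refine ⟨x, hx, ?_⟩
      simp only [uniq x hx n c1 c2, hkx]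
  · intro x hx
    have hFx := (FS x).2 hx
    refine ⟨hFx, ?_⟩
    have e : idx (F x) = idx x + 1 := by
      apply uniq _ hFx
      · rw [hsucc]; exact F.strictMono (hi1 x hx)
      · rw [hsucc]; exact F.monotone (hi2 x hx)
    simp only [e, k, hsucc]
    congr 3
    rw [← hsucc']; congr 2; ring
  · have : idx x0 = 0 := by
      apply uniq _ hx0
      · simpa using hF _ hx0
      · simp
    simp [this, k, φ0]

lemma glue {F G : ℝ → ℝ} {S T S' T' : Set ℝ} {h1 h2 : ℝ → ℝ} (c1 : Cj F G S T h1)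
    (c2 : Cj F G S' T' h2) (hS : ∀ x ∈ S, ∀ y ∈ S', x < y) (hT : ∀ x ∈ T, ∀ y ∈ T', x < y) :
    ∃ h, Cj F G (S ∪ S') (T ∪ T') h ∧ Set.EqOn h h1 S ∧ Set.EqOn h h2 S' := by
  classical
  obtain ⟨m1, i1, r1⟩ := c1
  obtain ⟨m2, i2, r2⟩ := c2
  have e1 : Set.EqOn (fun x => if x ∈ S then h1 x else h2 x) h1 S := by
    intro x hx; simp [hx]
  have e2 : Set.EqOn (fun x => if x ∈ S then h1 x else h2 x) h2 S' := by
    intro x hx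
    have : x ∉ S := fun h => lt_irrefl _ (hS x h x hx)
    simp [this]
  generalize (fun x => if x ∈ S then h1 x else h2 x) = h at e1 e2
  refine ⟨h, ⟨?_, ?_, ?_⟩, e1, e2⟩
  · rintro x (hx | hx) y (hy | hy) hxy
    · rw [e1 hx, e1 hy]; exact m1 hx hy hxy
    · rw [e1 hx, e2 hy]
      exact hT _ (i1 ▸ Set.mem_image_of_mem _ hx) _ (i2 ▸ Set.mem_image_of_mem _ hy)
    · exact absurd hxy (hS _ hy _ hx).not_gt
    · rw [e2 hx, e2 hy]; exact m2 hx hy hxy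
  · rw [Set.image_union, e1.image_eq, e2.image_eq, i1, i2]
  · rintro x (hx | hx)
    · obtain ⟨a, b⟩ := r1 x hx
      exact ⟨Or.inl a, by rw [e1 hx, e1 a, b]⟩
    · obtain ⟨a, b⟩ := r2 x hx
      exact ⟨Or.inr a, by rw [e2 hx, e2 a, b]⟩

lemma cj_single {F G : ℝ → ℝ} {a b : ℝ} (ha : F a = a) (hb : G b = b) :
    Cj F G {a} {b} (fun _ => b) := by
  refine ⟨by simp, by simp, ?_⟩
  rintro x rfl
  simp [ha, hb]

lemma cj_symm {F G : ℝ ≃o ℝ} {S T : Set ℝ} {h : ℝ → ℝ} (c : Cj F.symm G.symm S T h)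
    (FS : ∀ x ∈ S, F x ∈ S) : Cj F G S T h := by
  obtain ⟨m, i, r⟩ := c
  refine ⟨m, i, fun x hx => ⟨FS x hx, ?_⟩⟩
  have := (r _ (FS x hx)).2
  rw [OrderIso.symm_apply_apply] at this
  rw [this, OrderIso.apply_symm_apply]

lemma cj_univ {F G h : ℝ → ℝ} (c : Cj F G Set.univ Set.univ h) :
    ∃ H : ℝ ≃o ℝ, (∀ x, H x = h x) ∧ ∀ x, H (F x) = G (H x) := by
  obtain ⟨m, i, r⟩ := c
  have hs : Function.Surjective h := by
    rwa [Set.image_univ, Set.range_eq_univ] at i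
  refine ⟨(strictMonoOn_univ.1 m).orderIsoOfSurjective h hs, fun x => rfl, fun x => ?_⟩
  exact (r x trivial).2

def Glob (F : ℝ → ℝ) (ν : ℝ) : Prop :=
  StrictMono F ∧ Continuous F ∧ StrictMonoOn (fun x => F x - x) (Set.Iic 0) ∧
    StrictAntiOn (fun x => F x - x) (Set.Ici 0) ∧ F 0 = ν ∧ Filter.Tendsto F Filter.atTop Filter.atTop

lemma Glob.iso {F : ℝ → ℝ} {ν : ℝ} (g : Glob F ν) : ∃ H : ℝ ≃o ℝ, ∀ x, H x = F x := by
  obtain ⟨m, c, d1, d2, f0, t⟩ := g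
  have hb : Filter.Tendsto F Filter.atBot Filter.atBot := by
    refine Filter.tendsto_atBot_mono' Filter.atBot (f₂ := F) (f₁ := fun x => x + ν) ?_
      (Filter.tendsto_atBot_add_const_right _ _ Filter.tendsto_id)
    filter_upwards [Filter.eventually_le_atBot 0] with x hx
    have := d1.monotoneOn (Set.mem_Iic.2 hx) (Set.mem_Iic.2 le_rfl) hx
    simp only [f0] at this; linarith
  exact ⟨m.orderIsoOfSurjective F (c.surjective t hb), fun x => rfl⟩

lemma Glob.neg {F : ℝ → ℝ} {ν : ℝ} (g : Glob F ν) (hν : ν ≤ 0) {x : ℝ} (hx : x ≠ 0 ∨ ν < 0) :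
    F x < x := by
  obtain ⟨m, c, d1, d2, f0, t⟩ := g
  rcases lt_trichotomy x 0 with h | h | h
  · have := d1 (Set.mem_Iic.2 h.le) (Set.mem_Iic.2 le_rfl) h
    simp only [f0] at this; linarith
  · subst h
    have : ν < 0 := by simpa using hx
    linarith
  · have := d2 (Set.mem_Ici.2 le_rfl) (Set.mem_Ici.2 h.le) h
    simp only [f0] at this; linarith

lemma Glob.pos {F : ℝ → ℝ} {ν δ : ℝ} (g : Glob F ν) (hν : 0 < ν) (hδ : 0 < δ) (h1 : F δ < δ)
    (h2 : F (-δ) < -δ) : ∃ a b, -δ < a ∧ a < b ∧ b < δ ∧ F a = a ∧ F b = b ∧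
      (∀ x < a, F x < x) ∧ (∀ x > a, x < b → x < F x) ∧ ∀ x > b, F x < x := by
  obtain ⟨m, c, d1, d2, f0, t⟩ := g
  have cD : Continuous fun x => F x - x := by fun_prop
  obtain ⟨a, ⟨ha1, ha2⟩, ha⟩ := intermediate_value_Ioo (show -δ ≤ 0 by linarith) cD.continuousOn
    (show (0:ℝ) ∈ Set.Ioo _ _ from ⟨by linarith, by linarith⟩)
  obtain ⟨b, ⟨hb1, hb2⟩, hb⟩ := intermediate_value_Ioo' hδ.le cD.continuousOn
    (show (0:ℝ) ∈ Set.Ioo _ _ from ⟨by linarith, by linarith⟩)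
  simp only at ha hb
  refine ⟨a, b, ha1, by linarith, hb2, by linarith, by linarith, ?_, ?_, ?_⟩
  · intro x hx
    have := d1 (Set.mem_Iic.2 (hx.trans ha2).le) (Set.mem_Iic.2 ha2.le) hx
    simp only at this; linarith
  · intro x hx hx'
    rcases le_total x 0 with h | h
    · have := d1 (Set.mem_Iic.2 ha2.le) (Set.mem_Iic.2 h) hx
      simp only at this; linarith
    · have := d2 (Set.mem_Ici.2 h) (Set.mem_Ici.2 hb1.le) hx'
      simp only at this; linarith
  · intro x hx
    have := d2 (Set.mem_Ici.2 hb1.le) (Set.mem_Ici.2 (hb1.trans hx).le) hx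
    simp only at this; linarith

lemma inv_lt {F : ℝ ≃o ℝ} {a : ℝ} (ha : F a = a) (x : ℝ) : F x < a ↔ x < a := by
  conv_lhs => rw [← ha]
  exact F.lt_iff_lt

lemma inv_gt {F : ℝ ≃o ℝ} {a : ℝ} (ha : F a = a) (x : ℝ) : a < F x ↔ a < x := by
  conv_lhs => rw [← ha]
  exact F.lt_iff_lt

lemma key {F G : ℝ → ℝ} {ν δ c y0 : ℝ} (gF : Glob F ν) (gG : Glob G ν) (hδ : 0 < δ) (hc : 0 < c)
    (F1 : F δ < δ) (F2 : F (-δ) < -δ) (G1 : G c < c) (G2 : G (-c) < -c)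
    (y1 : 0 < y0) (y2 : y0 ≤ c) (y3 : G y0 < 0 ∨ 0 ≤ ν) (hνδ : -δ < ν) :
    ∃ h : ℝ ≃o ℝ, (∀ x, h (F x) = G (h x)) ∧ h δ ≤ c ∧ 0 ∈ h '' Set.Ioo (-δ) δ := by
  obtain ⟨f, hf⟩ := gF.iso
  obtain ⟨g, hg⟩ := gG.iso
  obtain rfl : (f : ℝ → ℝ) = F := funext hf
  obtain rfl : (g : ℝ → ℝ) = G := funext hg
  have fin : ∀ h : ℝ ≃o ℝ, 0 < h δ → h (-δ) < 0 → (0:ℝ) ∈ h '' Set.Ioo (-δ) δ := by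
    intro h p1 p2
    refine ⟨h.symm 0, ⟨?_, ?_⟩, by simp⟩
    · rw [← h.lt_iff_lt]; simpa
    · rw [← h.lt_iff_lt]; simpa
  rcases lt_trichotomy ν 0 with hν | hν | hν
  · obtain ⟨h, ch, h0⟩ := core f g Set.univ Set.univ Set.ordConnected_univ Set.ordConnected_univ
      (by simp) (by simp) (fun x _ => gF.neg hν.le (Or.inr hν))
      (fun x _ => gG.neg hν.le (Or.inr hν)) δ y0 trivial trivial
    obtain ⟨H, H1, H2⟩ := cj_univ ch
    rw [← H1] at h0
    refine ⟨H, H2, h0.trans_le y2, fin H (by linarith) ?_⟩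
    have e : f 0 < f δ := f.strictMono hδ
    rw [gF.2.2.2.2.1] at e
    have e2 : H (-δ) < H (f δ) := H.strictMono (by linarith)
    rw [H2, h0] at e2
    rcases y3 with h | h <;> linarith
  · have fz : f 0 = 0 := gF.2.2.2.2.1.trans hν
    have gz : g 0 = 0 := gG.2.2.2.2.1.trans hν
    obtain ⟨h1, c1, e1⟩ := core f g (Set.Iio 0) (Set.Iio 0) Set.ordConnected_Iio Set.ordConnected_Iio
      (inv_lt fz) (inv_lt gz) (fun x hx => gF.neg hν.le (Or.inl (ne_of_lt hx)))
      (fun x hx => gG.neg hν.le (Or.inl (ne_of_lt hx))) (-δ) (-c) (by simpa) (by simpa)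
    obtain ⟨h2, c2, e2⟩ := core f g (Set.Ioi 0) (Set.Ioi 0) Set.ordConnected_Ioi Set.ordConnected_Ioi
      (inv_gt fz) (inv_gt gz) (fun x hx => gF.neg hν.le (Or.inl (ne_of_gt hx)))
      (fun x hx => gG.neg hν.le (Or.inl (ne_of_gt hx))) δ c hδ hc
    obtain ⟨h3, c3, e3, -⟩ := glue c1 (cj_single fz gz) (by simp) (by simp)
    obtain ⟨h4, c4, e4, e4'⟩ := glue c3 c2 (by simp +contextual; intros; linarith)
      (by simp +contextual; intros; linarith)
    have u : Set.Iio (0:ℝ) ∪ {0} ∪ Set.Ioi 0 = Set.univ := by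
      ext x; simp
    rw [u] at c4
    obtain ⟨H, H1, H2⟩ := cj_univ c4
    have q1 : H δ = c := by rw [H1, e4' hδ, e2]
    have q2 : H (-δ) = -c := by
      have : -δ ∈ Set.Iio (0:ℝ) := by simpa
      rw [H1, e4 (Or.inl this), e3 this, e1]
    exact ⟨H, H2, q1.le, fin H (by linarith) (by linarith)⟩
  · obtain ⟨a, b, a1, ab, b1, fa, fb, f1, f2, f3⟩ := gF.pos hν hδ F1 F2
    obtain ⟨a', b', a1', ab', b1', ga, gb, g1, g2, g3⟩ := gG.pos hν hc G1 G2
    obtain ⟨h1, c1, e1⟩ := core f g (Set.Iio a) (Set.Iio a') Set.ordConnected_Iio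
      Set.ordConnected_Iio (inv_lt fa) (inv_lt ga) f1 g1 (-δ) (-c) a1 a1'
    obtain ⟨h2, c2, e2⟩ := core f g (Set.Ioi b) (Set.Ioi b') Set.ordConnected_Ioi
      Set.ordConnected_Ioi (inv_gt fb) (inv_gt gb) f3 g3 δ c b1 b1'
    have If : ∀ x, f x ∈ Set.Ioo a b ↔ x ∈ Set.Ioo a b := fun x =>
      and_congr (inv_gt fa x) (inv_lt fb x)
    have Ig : ∀ x, g x ∈ Set.Ioo a' b' ↔ x ∈ Set.Ioo a' b' := fun x =>
      and_congr (inv_gt ga x) (inv_lt gb x)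
    obtain ⟨h3, c3, -⟩ := core f.symm g.symm (Set.Ioo a b) (Set.Ioo a' b') Set.ordConnected_Ioo
      Set.ordConnected_Ioo (fun x => by rw [← If, f.apply_symm_apply])
      (fun x => by rw [← Ig, g.apply_symm_apply])
      (fun x hx => by rw [← f.lt_iff_lt, f.apply_symm_apply]; exact f2 x hx.1 hx.2)
      (fun x hx => by rw [← g.lt_iff_lt, g.apply_symm_apply]; exact g2 x hx.1 hx.2)
      ((a + b) / 2) ((a' + b') / 2) ⟨by linarith, by linarith⟩ ⟨by linarith, by linarith⟩
    replace c3 := cj_symm c3 (fun x hx => (If x).2 hx)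
    obtain ⟨k1, d1, m1, -⟩ := glue c1 (cj_single fa ga) (by simp) (by simp)
    obtain ⟨k2, d2, -, m2'⟩ := glue (cj_single fb gb) c2 (by simp) (by simp)
    obtain ⟨k3, d3, m3, -⟩ := glue d1 c3
      (by rintro x (hx | hx) y ⟨hy, -⟩ <;> simp at hx <;> linarith)
      (by rintro x (hx | hx) y ⟨hy, -⟩ <;> simp at hx <;> linarith)
    obtain ⟨k4, d4, m4, m4'⟩ := glue d3 d2
      (by rintro x ((hx | hx) | ⟨-, hx⟩) y (hy | hy) <;> simp at hx hy <;> linarith)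
      (by rintro x ((hx | hx) | ⟨-, hx⟩) y (hy | hy) <;> simp at hx hy <;> linarith)
    have u : ∀ a b : ℝ, a < b → 
        Set.Iio a ∪ {a} ∪ Set.Ioo a b ∪ ({b} ∪ Set.Ioi b) = Set.univ := by
      intro a b hab
      ext x; simp
      rcases le_or_gt x a with h | h
      · tauto
      · rcases lt_or_ge x b with h | h <;> tauto
    rw [u a b ab, u a' b' ab'] at d4
    obtain ⟨H, H1, H2⟩ := cj_univ d4
    have q1 : H δ = c := by rw [H1, m4' (Or.inr b1), m2' b1, e2]
    have q2 : H (-δ) = -c := by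
      rw [H1, m4 (Or.inl (Or.inl a1)), m3 (Or.inl a1), m1 a1, e1]
    exact ⟨H, H2, q1.le, fin H (by linarith) (by linarith)⟩

lemma plus_half_tendsto (C : ℝ) {F : ℝ → ℝ} {s r : ℝ} (hs : 0 < s) (h : ∀ x ≥ r, F x = C + s * x) :
    Filter.Tendsto F Filter.atTop Filter.atTop := by
  have : Filter.Tendsto (fun x : ℝ => C + s * x) Filter.atTop Filter.atTop :=
    Filter.tendsto_atTop_add_const_left _ _ (Filter.tendsto_id.const_mul_atTop hs)
  refine this.congr' ?_
  filter_upwards [Filter.eventually_ge_atTop r] with x hx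
  exact (h x hx).symm

lemma glob_pw {L R : ℝ → ℝ} {ν : ℝ} (cL : Continuous L) (cR : Continuous R) (L0 : L 0 = ν)
    (R0 : R 0 = ν) (hL : StrictMonoOn (fun x => L x - x) (Set.Iic 0))
    (hR : StrictAntiOn (fun x => R x - x) (Set.Ici 0)) (hR' : StrictMonoOn R (Set.Ici 0))
    (t : Filter.Tendsto R Filter.atTop Filter.atTop) :
    Glob (fun x => if x ≤ 0 then L x else R x) ν := by
  have eL : Set.EqOn (fun x => if x ≤ 0 then L x else R x) L (Set.Iic 0) := by
    intro x hx; simp only [Set.mem_Iic] at hx; simp [hx]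
  have eR : Set.EqOn (fun x => if x ≤ 0 then L x else R x) R (Set.Ici 0) := by
    intro x hx
    rcases eq_or_lt_of_le (Set.mem_Ici.1 hx) with h | h
    · subst h; simp [L0, R0]
    · simp [h.not_ge]
  have cF : Continuous (fun x => if x ≤ 0 then L x else R x) :=
    Continuous.if_le cL cR continuous_id continuous_const (by rintro x rfl; rw [L0, R0])
  generalize (fun x => if x ≤ 0 then L x else R x) = F at eL eR cF
  have hL' : StrictMonoOn L (Set.Iic 0) := by
    intro x hx y hy hxy
    have := hL hx hy hxy
    simp only at this; linarith
  refine ⟨?_, cF, ?_, ?_, ?_, ?_⟩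
  · exact (hL'.congr eL.symm).Iic_union_Ici (hR'.congr eR.symm)
  · exact hL.congr fun x hx => by simp [eL hx]
  · exact hR.congr fun x hx => by simp [eR hx]
  · rw [eL (Set.mem_Iic.2 le_rfl), L0]
  · refine t.congr' ?_
    filter_upwards [Filter.eventually_ge_atTop 0] with x hx
    exact (eR hx).symm

lemma glob_pl {ν sL sR : ℝ} (hsL : 1 < sL) (hsR0 : 0 < sR) (hsR1 : sR < 1) :
    Glob (fun y => if y ≤ 0 then ν + sL * y else ν + sR * y) ν := by
  apply glob_pw (by fun_prop) (by fun_prop) (by simp) (by simp)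
  · intro x _ y _ hxy
    simp only; nlinarith
  · intro x _ y _ hxy
    simp only; nlinarith
  · intro x _ y _ hxy
    simp only; nlinarith
  · exact plus_half_tendsto ν hsR0 (r := 0) fun x _ => rfl

lemma glob_quad {ν : ℝ} : ∃ G, Glob G ν ∧ ∀ y ≤ 1/4, G y = ν + y - y ^ 2 := by
  refine ⟨_, glob_pw (L := fun y => ν + y - y ^ 2)
    (R := fun y => if y ≤ 1/4 then ν + y - y^2 else (ν + 1/16) + 1/2 * y)
    (by fun_prop) ?_ (by simp) (by norm_num) ?_ ?_ ?_ ?_, ?_⟩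
  · exact Continuous.if_le (by fun_prop) (by fun_prop) continuous_id continuous_const
      (by rintro x rfl; norm_num; ring)
  · intro x hx y hy hxy
    simp only [Set.mem_Iic] at hx hy ⊢
    nlinarith
  · intro x hx y hy hxy
    simp only [Set.mem_Ici] at hx hy ⊢
    split_ifs <;> nlinarith
  · intro x hx y hy hxy
    simp only [Set.mem_Ici] at hx hy ⊢
    split_ifs <;> nlinarith
  · refine plus_half_tendsto (ν + 1/16) (s := 1/2) (by norm_num) (r := 1) fun x hx => ?_
    rw [if_neg (by linarith)]
  · intro y hy
    simp only [hy, if_true, ite_self]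

lemma glob_ext {L R : ℝ → ℝ} {ν δ : ℝ} (hδ : 0 < δ) (cL : ContinuousOn L (Set.Icc (-δ) δ))
    (cR : ContinuousOn R (Set.Icc (-δ) δ)) (L0 : L 0 = ν) (R0 : R 0 = ν)
    (hL : StrictMonoOn (fun x => L x - x) (Set.Icc (-δ) 0))
    (hR : StrictAntiOn (fun x => R x - x) (Set.Icc 0 δ)) (hR' : StrictMonoOn R (Set.Icc 0 δ)) :
    ∃ F, Glob F ν ∧ ∀ x ∈ Set.Icc (-δ) δ, F x = if x ≤ 0 then L x else R x := by
  let p : ℝ → ℝ := fun x => max (-δ) (min δ x)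
  have hp : ∀ x, p x ∈ Set.Icc (-δ) δ := fun x =>
    ⟨le_max_left _ _, max_le (by linarith) (min_le_left _ _)⟩
  have cp : Continuous p := by fun_prop
  have p1 : ∀ x ∈ Set.Icc (-δ) δ, p x = x := by
    intro x hx; simp [p, hx.1, hx.2]
  have p2 : ∀ x, x ≤ -δ → p x = -δ := by
    intro x hx; simp only [p]; rw [min_eq_right (by linarith), max_eq_left hx]
  have p3 : ∀ x, δ ≤ x → p x = δ := by
    intro x hx; simp only [p]; rw [min_eq_left hx, max_eq_right (by linarith)]
  refine ⟨_, glob_pw (L := fun x => L (p x) + 2 * (x - p x))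
    (R := fun x => R (p x) + 1/2 * (x - p x)) ?_ ?_ ?_ ?_ ?_ ?_ ?_ ?_, ?_⟩
  · exact (cL.comp_continuous cp hp).add (by fun_prop)
  · exact (cR.comp_continuous cp hp).add (by fun_prop)
  · simp only [p1 0 ⟨by linarith, hδ.le⟩]; simp [L0]
  · simp only [p1 0 ⟨by linarith, hδ.le⟩]; simp [R0]
  · intro x hx y hy hxy
    simp only [Set.mem_Iic] at hx hy ⊢
    have hz : -δ ≤ 0 := by linarith
    rcases le_total x (-δ) with h1 | h1 <;> rcases le_total y (-δ) with h2 | h2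
    · rw [p2 x h1, p2 y h2]; linarith
    · rw [p2 x h1, p1 y ⟨h2, by linarith⟩]
      have := hL.monotoneOn ⟨le_rfl, by linarith⟩ ⟨h2, hy⟩ h2
      try simp only at this
      rcases h1.eq_or_lt with e | e
      · have := hL ⟨le_rfl, by linarith⟩ ⟨h2, hy⟩ (e ▸ hxy)
        simp only at this; linarith
      · linarith
    · linarith
    · rw [p1 x ⟨h1, by linarith⟩, p1 y ⟨h2, by linarith⟩]
      have := hL ⟨h1, hx⟩ ⟨h2, hy⟩ hxy
      simp only at this; linarith
  · intro x hx y hy hxy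
    simp only [Set.mem_Ici] at hx hy ⊢
    rcases le_total x δ with h1 | h1 <;> rcases le_total y δ with h2 | h2
    · rw [p1 x ⟨by linarith, h1⟩, p1 y ⟨by linarith, h2⟩]
      have := hR ⟨hx, h1⟩ ⟨hy, h2⟩ hxy
      simp only at this; linarith
    · rw [p1 x ⟨by linarith, h1⟩, p3 y h2]
      have := hR.antitoneOn ⟨hx, h1⟩ ⟨hδ.le, le_rfl⟩ h1
      try simp only at this
      rcases h2.eq_or_lt with e | e
      · have := hR ⟨hx, h1⟩ ⟨hδ.le, le_rfl⟩ (e ▸ hxy)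
        simp only at this; linarith
      · linarith
    · linarith
    · rw [p3 x h1, p3 y h2]; linarith
  · intro x hx y hy hxy
    simp only [Set.mem_Ici] at hx hy ⊢
    rcases le_total x δ with h1 | h1 <;> rcases le_total y δ with h2 | h2
    · rw [p1 x ⟨by linarith, h1⟩, p1 y ⟨by linarith, h2⟩]
      have := hR' ⟨hx, h1⟩ ⟨hy, h2⟩ hxy
      linarith
    · rw [p1 x ⟨by linarith, h1⟩, p3 y h2]
      have := hR'.monotoneOn ⟨hx, h1⟩ ⟨hδ.le, le_rfl⟩ h1
      rcases h2.eq_or_lt with e | e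
      · have := hR' ⟨hx, h1⟩ ⟨hδ.le, le_rfl⟩ (e ▸ hxy)
        linarith
      · linarith
    · linarith
    · rw [p3 x h1, p3 y h2]; linarith
  · refine plus_half_tendsto (R δ - 1/2 * δ) (s := 1/2) (by norm_num) (r := δ) fun x hx => ?_
    simp only [p3 x hx]; ring
  · intro x hx
    simp [p1 x hx]

lemma topConj_of_iso (h : ℝ ≃o ℝ) {f g : ℝ → ℝ} {U : Set ℝ} (hc : ∀ x ∈ U, h (f x) = g (h x)) :
    TopConjOn f g U (h '' U) := by
  refine ⟨h, ⟨⟨Set.mapsTo_image _ _, h.injective.injOn, Set.surjOn_image _ _⟩,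
    h.continuous.continuousOn, h.symm, ⟨?_, ?_⟩, h.symm.continuous.continuousOn⟩, fun x hx _ => hc x hx⟩
  · intro x _; simp
  · intro x _; simp

/-- strict-derivative estimate in the first variable, uniform in the parameter -/
lemma strict_est {f : ℝ → ℝ → ℝ} {s : Set (ℝ × ℝ)} (hs : s ∈ nhds ((0:ℝ), (0:ℝ)))
    (hf : ContDiffOn ℝ 1 (fun p : ℝ × ℝ => f p.1 p.2) s) {a : ℝ}
    (ha : deriv (fun x => f x 0) 0 = a) {ε : ℝ} (hε : 0 < ε) :
    ∃ r > 0, ∀ x y μ : ℝ, |x| < r → |y| < r → |μ| < r →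
      |f x μ - f y μ - a * (x - y)| ≤ ε * |x - y| := by
  have hd := (hf.contDiffAt hs).hasStrictFDerivAt (by norm_num)
  set A := fderiv ℝ (fun p : ℝ × ℝ => f p.1 p.2) (0, 0)
  have hA : A (1, 0) = a := by
    rw [← ha]
    have h2 : HasDerivAt (fun x : ℝ => (x, (0:ℝ))) (1, 0) 0 :=
      (hasDerivAt_id (0:ℝ)).prodMk (hasDerivAt_const _ _)
    have := HasFDerivAt.comp_hasDerivAt (f := fun x : ℝ => (x, (0:ℝ))) (0:ℝ) (l := fun p : ℝ × ℝ => f p.1 p.2) hd.hasFDerivAt h2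
    exact this.deriv.symm
  have hev := hd.isLittleO.def hε
  obtain ⟨r, hr, hball⟩ := Metric.eventually_nhds_iff.1 hev
  refine ⟨r, hr, fun x y μ hx hy hμ => ?_⟩
  have := @hball ((x, μ), (y, μ)) (by
    simp only [Prod.dist_eq, Real.dist_eq, sub_zero]
    simp [hx, hy, hμ])
  have e : A ((x, μ) - (y, μ)) = a * (x - y) := by
    have : ((x, μ) - (y, μ) : ℝ × ℝ) = (x - y) • ((1:ℝ), (0:ℝ)) := by simp
    rw [this, map_smul, hA]; simp [mul_comm]
  simp only [e] at this
  simpa [Prod.norm_def] using this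

set_option maxHeartbeats 2000000 in
theorem stmt3 (ω₁ ω₂ ι₁ ι₂ aL aR β sL sR : ℝ) (fL fR : ℝ → ℝ → ℝ)
    (hω₁ : ω₁ < 0) (hω₂ : 0 < ω₂) (hι₁ : ι₁ < 0) (hι₂ : 0 < ι₂)
    (hfL : ContDiffOn ℝ 1 (fun p : ℝ × ℝ => fL p.1 p.2) (Set.Ioo ω₁ ω₂ ×ˢ Set.Ioo ι₁ ι₂))
    (hfR : ContDiffOn ℝ 1 (fun p : ℝ × ℝ => fR p.1 p.2) (Set.Ioo ω₁ ω₂ ×ˢ Set.Ioo ι₁ ι₂))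
    (hcont : ∀ μ ∈ Set.Ioo ι₁ ι₂, fL 0 μ = fR 0 μ)
    (hbcb : fL 0 0 = 0)
    (haL : deriv (fun x => fL x 0) 0 = aL)
    (haR : deriv (fun x => fR x 0) 0 = aR)
    (hβL : deriv (fun μ => fL 0 μ) 0 = β)
    (hβR : deriv (fun μ => fR 0 μ) 0 = β)
    (hβ : 0 < β)
    (hL : 1 < aL) (hR0 : 0 < aR) (hR1 : aR < 1)
    (hsL : 1 < sL) (hsR0 : 0 < sR) (hsR1 : sR < 1) :
    ∃ μ₀ > 0, Set.Ioo (-μ₀) μ₀ ⊆ Set.Ioo ι₁ ι₂ ∧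
      ∃ N : Set ℝ, IsOpen N ∧ (0:ℝ) ∈ N ∧ N ⊆ Set.Ioo ω₁ ω₂ ∧
        ∃ M P : ℝ → Set ℝ, ∀ μ ∈ Set.Ioo (-μ₀) μ₀,
          IsOpen (M μ) ∧ (0:ℝ) ∈ M μ ∧ IsOpen (P μ) ∧ (0:ℝ) ∈ P μ ∧
          TopConjOn (pwFam fL fR μ)
            (fun y => if y ≤ 0 then fL 0 μ + sL * y else fL 0 μ + sR * y) N (M μ) ∧
          TopConjOn (fun y => if y ≤ 0 then fL 0 μ + sL * y else fL 0 μ + sR * y)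
            (fun y => fL 0 μ + y - y ^ 2) (M μ) (P μ) ∧
          TopConjOn (pwFam fL fR μ) (fun y => fL 0 μ + y - y ^ 2) N (P μ) := by
  have hs : Set.Ioo ω₁ ω₂ ×ˢ Set.Ioo ι₁ ι₂ ∈ nhds ((0:ℝ), (0:ℝ)) :=
    prod_mem_nhds (Ioo_mem_nhds hω₁ hω₂) (Ioo_mem_nhds hι₁ hι₂)
  obtain ⟨r1, hr1, E1⟩ := strict_est hs hfL haL (ε := (aL - 1) / 2) (by linarith)
  obtain ⟨ε, hε, hε1, hε2⟩ : ∃ ε > 0, ε < aR ∧ ε < 1 - aR := by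
    have : 0 < min aR (1 - aR) := lt_min hR0 (by linarith)
    exact ⟨min aR (1 - aR) / 2, by linarith, by linarith [min_le_left aR (1 - aR)],
      by linarith [min_le_right aR (1 - aR)]⟩
  obtain ⟨r2, hr2, E2⟩ := strict_est hs hfR haR (ε := ε) hε
  obtain ⟨δ, hδ, d1, d2, d3, d4⟩ : ∃ δ > 0, δ < r1 ∧ δ < r2 ∧ δ < ω₂ ∧ δ < -ω₁ := by
    obtain ⟨δ, h0, h1⟩ := exists_between (show 0 < min (min r1 r2) (min ω₂ (-ω₁)) by
      simp [*])
    simp only [lt_min_iff] at h1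
    exact ⟨δ, h0, h1.1.1, h1.1.2, h1.2.1, h1.2.2⟩
  obtain ⟨η, hη, n1, n2, n3, n4, n5, n6⟩ : ∃ η > 0, η < δ ∧ η < (aL - 1) / 2 * δ ∧
      η < (1 - aR - ε) * δ ∧ η < 1/16 ∧ η < (1 - sR) / 4 ∧ η < (sL - 1) / 4 := by
    have q1 : 0 < (aL - 1) / 2 * δ := mul_pos (by linarith) hδ
    have q2 : 0 < (1 - aR - ε) * δ := mul_pos (by linarith) hδ
    have q3 : 0 < (1 - sR) / 4 := by linarith
    have q4 : 0 < (sL - 1) / 4 := by linarith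
    obtain ⟨η, h0, h1⟩ := exists_between (show 0 < min (min (min δ ((aL - 1) / 2 * δ))
      (min ((1 - aR - ε) * δ) (1/16))) (min ((1 - sR) / 4) ((sL - 1) / 4)) by
        simp only [lt_min_iff]; refine ⟨⟨⟨?_, ?_⟩, ?_, ?_⟩, ?_, ?_⟩ <;> first | assumption | norm_num)
    simp only [lt_min_iff] at h1
    exact ⟨η, h0, h1.1.1.1, h1.1.1.2, h1.1.2.1, h1.1.2.2, h1.2.1, h1.2.2⟩
  have hcν : ContinuousAt (fun μ => fL 0 μ) 0 := by
    have h1 : ContinuousAt (fun p : ℝ × ℝ => fL p.1 p.2) (0, 0) := hfL.continuousOn.continuousAt hs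
    exact ContinuousAt.comp (f := fun μ : ℝ => ((0:ℝ), μ)) h1 (by fun_prop)
  obtain ⟨r3, hr3, E3⟩ := Metric.continuousAt_iff.1 hcν η hη
  simp only [hbcb, Real.dist_eq, sub_zero] at E3
  obtain ⟨μ₀, hμ₀, m1, m2, m3, m4, m5⟩ : ∃ μ₀ > 0, μ₀ < r1 ∧ μ₀ < r2 ∧ μ₀ < r3 ∧ μ₀ < ι₂ ∧
      μ₀ < -ι₁ := by
    obtain ⟨δ, h0, h1⟩ := exists_between (show 0 < min (min r1 r2) (min r3 (min ι₂ (-ι₁))) by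
      simp [*])
    simp only [lt_min_iff] at h1
    exact ⟨δ, h0, h1.1.1, h1.1.2, h1.2.1, h1.2.2.1, h1.2.2.2⟩
  have hsub : Set.Ioo (-μ₀) μ₀ ⊆ Set.Ioo ι₁ ι₂ := Set.Ioo_subset_Ioo (by linarith) (by linarith)
  refine ⟨μ₀, hμ₀, hsub, Set.Ioo (-δ) δ, isOpen_Ioo, ⟨by linarith, hδ⟩,
    Set.Ioo_subset_Ioo (by linarith) (by linarith), ?_⟩
  -- per-parameter statement
  have main : ∀ μ ∈ Set.Ioo (-μ₀) μ₀, ∃ M P : Set ℝ,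
      IsOpen M ∧ (0:ℝ) ∈ M ∧ IsOpen P ∧ (0:ℝ) ∈ P ∧
          TopConjOn (pwFam fL fR μ)
            (fun y => if y ≤ 0 then fL 0 μ + sL * y else fL 0 μ + sR * y) (Set.Ioo (-δ) δ) M ∧
          TopConjOn (fun y => if y ≤ 0 then fL 0 μ + sL * y else fL 0 μ + sR * y)
            (fun y => fL 0 μ + y - y ^ 2) M P ∧
          TopConjOn (pwFam fL fR μ) (fun y => fL 0 μ + y - y ^ 2) (Set.Ioo (-δ) δ) P := by
    intro μ hμ
    have hμ' : |μ| < μ₀ := abs_lt.2 hμ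
    have hν := E3 (hμ'.trans m3)
    have R0 : fR 0 μ = fL 0 μ := (hcont μ (hsub hμ)).symm
    set ν := fL 0 μ with hνdef
    obtain ⟨ν1, ν2⟩ := abs_lt.1 hν
    have B1 : ∀ x y : ℝ, x ∈ Set.Icc (-δ) δ → y ∈ Set.Icc (-δ) δ → x < y →
        (1 + (aL - 1) / 2) * (y - x) ≤ fL y μ - fL x μ := by
      intro x y hx hy hxy
      have := E1 y x μ ((abs_le.2 hy).trans_lt d1) ((abs_le.2 hx).trans_lt d1) (hμ'.trans m1)
      rw [abs_of_pos (sub_pos.2 hxy)] at this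
      have := (abs_le.1 this).1
      linarith
    have B2 : ∀ x y : ℝ, x ∈ Set.Icc (-δ) δ → y ∈ Set.Icc (-δ) δ → x < y →
        (aR - ε) * (y - x) ≤ fR y μ - fR x μ ∧ fR y μ - fR x μ ≤ (aR + ε) * (y - x) := by
      intro x y hx hy hxy
      have := E2 y x μ ((abs_le.2 hy).trans_lt d2) ((abs_le.2 hx).trans_lt d2) (hμ'.trans m2)
      rw [abs_of_pos (sub_pos.2 hxy)] at this
      have := abs_le.1 this
      constructor <;> linarith
    have cc : ∀ f : ℝ → ℝ → ℝ, ContDiffOn ℝ 1 (fun p : ℝ × ℝ => f p.1 p.2)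
        (Set.Ioo ω₁ ω₂ ×ˢ Set.Ioo ι₁ ι₂) → ContinuousOn (fun x => f x μ) (Set.Icc (-δ) δ) := by
      intro f hf
      refine ContinuousOn.comp (f := fun x : ℝ => (x, μ)) hf.continuousOn (by fun_prop) ?_
      intro x hx
      exact ⟨⟨by linarith [hx.1], by linarith [hx.2]⟩, hsub hμ⟩
    obtain ⟨F, gF, eF⟩ := glob_ext (L := fun x => fL x μ) (R := fun x => fR x μ) (ν := ν) hδ
      (cc fL hfL) (cc fR hfR) rfl R0
      (by
        intro x hx y hy hxy
        have := B1 x y ⟨hx.1, by linarith [hx.2]⟩ ⟨hy.1, by linarith [hy.2]⟩ hxy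
        simp only
        nlinarith)
      (by
        intro x hx y hy hxy
        have := (B2 x y ⟨by linarith [hx.1], hx.2⟩ ⟨by linarith [hy.1], hy.2⟩ hxy).2
        simp only
        nlinarith)
      (by
        intro x hx y hy hxy
        have := (B2 x y ⟨by linarith [hx.1], hx.2⟩ ⟨by linarith [hy.1], hy.2⟩ hxy).1
        simp only
        nlinarith)
    have F1 : F δ < δ := by
      rw [eF δ ⟨by linarith, le_rfl⟩, if_neg (by linarith)]
      have := (B2 0 δ ⟨by linarith, by linarith⟩ ⟨by linarith, by linarith⟩ hδ).2
      rw [R0] at this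
      linarith
    have F2 : F (-δ) < -δ := by
      rw [eF (-δ) ⟨le_rfl, by linarith⟩, if_pos (by linarith)]
      have := B1 (-δ) 0 ⟨by linarith, by linarith⟩ ⟨by linarith, by linarith⟩ (by linarith)
      try simp only
      linarith
    have gG := glob_pl (ν := ν) hsL hsR0 hsR1
    obtain ⟨Q, gQ, eQ⟩ := glob_quad (ν := ν)
    obtain ⟨y0, y1, y2, y3⟩ : ∃ y0 : ℝ, 0 < y0 ∧ y0 ≤ 1/4 ∧ (y0 = - ν ∨ 0 ≤ ν) := by
      rcases lt_or_ge ν 0 with h | h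
      · exact ⟨-ν, by linarith, by linarith, Or.inl rfl⟩
      · exact ⟨1/4, by norm_num, le_rfl, Or.inr h⟩
    obtain ⟨h1, c1, -, z1⟩ := key (c := 1/4) (y0 := y0) gF gG hδ (by norm_num) F1 F2
      (by (try simp only); rw [if_neg (by norm_num)]; linarith)
      (by (try simp only); rw [if_pos (by norm_num)]; linarith) y1 y2
      (by
        rcases y3 with h | h
        · left; (try simp only); rw [if_neg (by linarith), h]; nlinarith
        · right; exact h) (by linarith)
    obtain ⟨h2, c2, b2, z2⟩ := key (c := 1/4) (y0 := y0) gF gQ hδ (by norm_num) F1 F2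
      (by rw [eQ _ le_rfl]; linarith)
      (by rw [eQ _ (by norm_num)]; linarith) y1 y2
      (by
        rcases y3 with h | h
        · left; rw [eQ _ y2, h]; nlinarith
        · right; exact h) (by linarith)
    have hq : ∀ x ∈ Set.Ioo (-δ) δ, Q (h2 x) = ν + h2 x - (h2 x) ^ 2 := fun x hx =>
      eQ _ ((h2.monotone hx.2.le).trans b2)
    have hf : ∀ x ∈ Set.Ioo (-δ) δ, pwFam fL fR μ x = F x := fun x hx =>
      (eF x ⟨hx.1.le, hx.2.le⟩).symm
    refine ⟨h1 '' Set.Ioo (-δ) δ, h2 '' Set.Ioo (-δ) δ, h1.toHomeomorph.isOpenMap _ isOpen_Ioo, z1,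
      h2.toHomeomorph.isOpenMap _ isOpen_Ioo, z2, topConj_of_iso h1 ?_, ?_, topConj_of_iso h2 ?_⟩
    · intro x hx
      rw [hf x hx, c1]
    · have e : h2 '' Set.Ioo (-δ) δ = (h1.symm.trans h2) '' (h1 '' Set.Ioo (-δ) δ) := by
        rw [Set.image_image]; simp
      rw [e]
      apply topConj_of_iso
      rintro _ ⟨x, hx, rfl⟩
      have := c1 x
      try simp only at this
      rw [← this]
      simp only [OrderIso.trans_apply, OrderIso.symm_apply_apply]
      rw [c2, hq x hx]
    · intro x hx
      rw [hf x hx, c2, hq x hx]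
  choose! M P hMP using main
  exact ⟨M, P, hMP⟩
end

section
/- Let (a,b) be an open interval containing 0 and let f : (a,b) → ℝ be C² with f′(x) < 0 for all x ∈ (a,b). Suppose 0 is a fixed point of f with f′(0) = λ ≠ −1, that f∘f has no fixed points in (a,b) other than 0, and that b < f(a). Define the linear map g(y) = λy. Then there exists an increasing C¹ diffeomorphism h from (f⁻¹(b), b) onto an open interval containing 0 such that h(f(x)) = g(h(x)) for all x ∈ (f⁻¹(b), b) with f(x) ∈ (f⁻¹(b), b). -/
/-- `h` is a `C¹` diffeomorphism from `U` onto `V`. -/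
def IsDiffeoOn (h : ℝ → ℝ) (U V : Set ℝ) : Prop :=
  Set.BijOn h U V ∧ ContDiffOn ℝ 1 h U ∧
    ∃ hinv : ℝ → ℝ, Set.InvOn hinv h U V ∧ ContDiffOn ℝ 1 hinv V

open Set Filter Topology

lemma aux_sq (c b : ℝ) (φ : ℝ → ℝ)
    (hmaps : ∀ x ∈ Ioo c b, φ x ∈ Ioo c b) (hc : c < 0) (hb : 0 < b)
    (hcont : ContinuousOn φ (Ioo c b))
    (hper : ∀ x ∈ Ioo c b, φ (φ x) = x → x = 0) (p q : ℝ) (hp : p ∈ Ioo c b) 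
    (hq : q ∈ Ioo c b)
    (hpq : ∀ x ∈ Ioo c b, φ (φ x) ∈ Icc p q) :
    (∀ x ∈ Ioo c 0, x < φ (φ x)) ∧ (∀ x ∈ Ioo 0 b, φ (φ x) < x) := by
  have hcc : ContinuousOn (fun x => φ (φ x) - x) (Ioo c b) :=
    (hcont.comp hcont hmaps).sub continuousOn_id
  constructor
  · intro x hx
    by_contra hlt
    push Not at hlt
    have hpx : p ≤ x := (hpq x ⟨hx.1, hx.2.trans hb⟩).1.trans hlt
    obtain ⟨z, hz1, hz2⟩ := exists_between hp.1
    have hzJ : z ∈ Ioo c b := ⟨hz1, by linarith [hp.2]⟩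
    have := intermediate_value_Icc' (a := z) (b := x) (by linarith)
      (hcc.mono (fun y hy => ⟨by linarith [hy.1], by linarith [hy.2, hx.2]⟩))
    obtain ⟨w, hw, hw0⟩ := this (show (0:ℝ) ∈ _ from ⟨by linarith, by linarith [(hpq z hzJ).1]⟩)
    have := hper w ⟨by linarith [hw.1], by linarith [hw.2, hx.2]⟩ (by simpa [sub_eq_zero] using hw0)
    linarith [hw.2, hx.2]
  · intro x hx
    by_contra hlt
    push Not at hlt
    have hpx : x ≤ q := hlt.trans (hpq x ⟨hc.trans hx.1, hx.2⟩).2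
    obtain ⟨z, hz1, hz2⟩ := exists_between hq.2
    have hzJ : z ∈ Ioo c b := ⟨by linarith [hq.1], hz2⟩
    have := intermediate_value_Icc' (a := x) (b := z) (by linarith)
      (hcc.mono (fun y hy => ⟨by linarith [hy.1, hx.1], by linarith [hy.2, hx.2]⟩))
    obtain ⟨w, hw, hw0⟩ := this (show (0:ℝ) ∈ _ from ⟨by linarith [(hpq z hzJ).2], by linarith⟩)
    have := hper w ⟨by linarith [hw.1, hx.1], by linarith [hw.2, hx.2]⟩ (by simpa [sub_eq_zero] using hw0)
    linarith [hw.1, hx.1]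

lemma aux_lam (b lam : ℝ) (φ : ℝ → ℝ) (hb : 0 < b) (h0 : φ 0 = 0)
    (hd : HasDerivAt φ lam 0) (h : ∀ x ∈ Ioo 0 b, φ (φ x) < x) (hlam : lam < 0) (hne : lam ≠ -1) :
    |lam| < 1 := by
  have hd2 : HasDerivAt (fun x => φ (φ x)) (lam * lam) 0 := by
    have h1 : HasDerivAt φ lam (φ 0) := by rw [h0]; exact hd
    exact h1.comp 0 hd
  have ht := hd2.tendsto_slope_zero_right
  have : lam * lam ≤ 1 := by
    refine le_of_tendsto ht ?_
    filter_upwards [Ioo_mem_nhdsGT hb] with x hx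
    simp only [zero_add, h0, sub_zero, smul_eq_mul]
    rw [inv_mul_le_iff₀ hx.1]
    linarith [h x hx]
  rw [abs_of_neg hlam]
  rcases lt_or_gt_of_ne hne with h | h
  · nlinarith
  · linarith

lemma aux_reach (c b : ℝ) (φ : ℝ → ℝ)
    (hmaps : ∀ x ∈ Ioo c b, φ x ∈ Ioo c b) (hc : c < 0) (hb : 0 < b)
    (hcont : ContinuousOn φ (Ioo c b)) (hanti : StrictAntiOn φ (Ioo c b)) (h0 : φ 0 = 0)
    (hper : ∀ x ∈ Ioo c b, φ (φ x) = x → x = 0)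
    (h : ∀ x ∈ Ioo c 0, x < φ (φ x)) (P : ℝ → Prop) (hP0 : ∀ᶠ x in 𝓝 0, P x)
    (hP : ∀ x ∈ Ioo c b, P (φ x) → P x) : ∀ x ∈ Ioo c b, P x := by
  have h0J : (0:ℝ) ∈ Ioo c b := ⟨hc, hb⟩
  have neg : ∀ x ∈ Ioo c 0, P x := by
    intro x hx
    set ψ : ℝ → ℝ := fun x => φ (φ x) with hψ
    have hstep : ∀ y ∈ Ioo c 0, ψ y ∈ Ioo c 0 := by
      intro y hy
      have hyJ : y ∈ Ioo c b := ⟨hy.1, hy.2.trans hb⟩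
      have h1 : 0 < φ y := by simpa [h0] using hanti hyJ h0J hy.2
      have h2 : φ (φ y) < 0 := by simpa [h0] using hanti h0J (hmaps y hyJ) h1
      exact ⟨(hmaps _ (hmaps y hyJ)).1, h2⟩
    have hit : ∀ n, ψ^[n] x ∈ Ioo c 0 := by
      intro n
      induction n with
      | zero => simpa using hx
      | succ n ih => rw [Function.iterate_succ_apply']; exact hstep _ ih
    have hmono : Monotone (fun n => ψ^[n] x) := by
      refine monotone_nat_of_le_succ (fun n => ?_)
      rw [Function.iterate_succ_apply']
      exact (h _ (hit n)).le
    have hbdd : BddAbove (range (fun n => ψ^[n] x)) := ⟨0, by rintro _ ⟨n, rfl⟩; exact (hit n).2.le⟩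
    have ht := tendsto_atTop_ciSup hmono hbdd
    set L := ⨆ n, ψ^[n] x with hL
    have hLx : x ≤ L := le_ciSup hbdd 0
    have hL0 : L ≤ 0 := ciSup_le (fun n => (hit n).2.le)
    have hLJ : L ∈ Ioo c b := ⟨by linarith [hx.1], by linarith⟩
    have hcψ : ContinuousAt ψ L :=
      (hcont.comp hcont hmaps).continuousAt (Ioo_mem_nhds hLJ.1 hLJ.2)
    have hfix := isFixedPt_of_tendsto_iterate ht hcψ
    have hLz : L = 0 := hper L hLJ hfix
    rw [hLz] at ht
    obtain ⟨n, hn⟩ := (ht.eventually hP0).exists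
    have : ∀ n, ∀ y ∈ Ioo c b, P (ψ^[n] y) → P y := by
      intro n
      induction n with
      | zero => intro y _ hy; simpa using hy
      | succ n ih =>
        intro y hy hPy
        rw [Function.iterate_succ_apply] at hPy
        exact hP y hy (hP _ (hmaps y hy) (ih _ (hmaps _ (hmaps y hy)) hPy))
    exact this n x ⟨hx.1, hx.2.trans hb⟩ hn
  intro x hx
  rcases lt_trichotomy x 0 with hlt | heq | hgt
  · exact neg x ⟨hx.1, hlt⟩
  · rw [heq]; exact hP0.self_of_nhds
  · refine hP x hx (neg _ ⟨(hmaps x hx).1, ?_⟩)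
    simpa [h0] using hanti h0J hx hgt

lemma aux_S (c b lam : ℝ) (φ s : ℝ → ℝ)
    (hmaps : ∀ x ∈ Ioo c b, φ x ∈ Ioo c b) (hc : c < 0) (hb : 0 < b)
    (hcont : ContinuousOn φ (Ioo c b)) (hanti : StrictAntiOn φ (Ioo c b)) (h0 : φ 0 = 0)
    (hper : ∀ x ∈ Ioo c b, φ (φ x) = x → x = 0)
    (h : ∀ x ∈ Ioo c 0, x < φ (φ x)) (hd : HasDerivAt φ lam 0) (hlam : |lam| < 1)
    (hs : ContinuousOn s (Ioo c b)) (hs0 : s 0 = 0) (hsd : DifferentiableAt ℝ s 0) :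
    ∃ S : ℝ → ℝ, ContinuousOn S (Ioo c b) ∧ ∀ x ∈ Ioo c b, S x = s x + S (φ x) := by
  obtain ⟨ρ, hρ1, hρ2⟩ := exists_between hlam
  have hρ0 : 0 < ρ := (abs_nonneg _).trans_lt hρ1
  have e1 : ∀ᶠ x in 𝓝 (0:ℝ), |φ x| ≤ ρ * |x| := by
    have := hd.isLittleO.def (sub_pos.2 hρ1)
    filter_upwards [this] with x hx
    simp only [h0, sub_zero, smul_eq_mul, Real.norm_eq_abs] at hx
    have h1 : |φ x| ≤ |φ x - x * lam| + |x * lam| := by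
      simpa using abs_add_le (φ x - x * lam) (x * lam)
    rw [abs_mul] at h1
    nlinarith
  have e2 : ∃ K, ∀ᶠ x in 𝓝 (0:ℝ), |s x| ≤ K * |x| := by
    obtain ⟨K, hK⟩ := hsd.hasDerivAt.isBigO_sub.bound
    refine ⟨K, ?_⟩
    filter_upwards [hK] with x hx
    simpa [hs0] using hx
  obtain ⟨K, e2⟩ := e2
  obtain ⟨δ, hδ, hball⟩ := Metric.eventually_nhds_iff.1
    (e1.and (e2.and (Ioo_mem_nhds hc hb : ∀ᶠ x in 𝓝 (0:ℝ), x ∈ Ioo c b)))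
  have hball' : ∀ x, |x| < δ → |φ x| ≤ ρ * |x| ∧ |s x| ≤ K * |x| ∧ x ∈ Ioo c b := by
    intro x hx; exact hball (by simpa using hx)
  have hK0 : 0 ≤ K := by
    have := (hball' (δ/2) (by rw [abs_of_pos (by linarith)]; linarith)).2.1
    have h3 := (abs_nonneg _).trans this
    rw [abs_of_pos (by linarith)] at h3
    by_contra hn
    push Not at hn
    nlinarith
  have hit : ∀ n x, |x| < δ → |φ^[n] x| ≤ ρ^n * |x| ∧ |φ^[n] x| < δ := by
    intro n x hx
    induction n with
    | zero => simpa using hx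
    | succ n ih =>
      rw [Function.iterate_succ_apply']
      have h1 := (hball' _ ih.2).1
      have h2 : ρ * |φ^[n] x| ≤ ρ * (ρ^n * |x|) := by gcongr; exact ih.1
      refine ⟨by rw [pow_succ]; linarith, ?_⟩
      nlinarith [abs_nonneg (φ^[n] x), ih.2]
  have hbd : ∀ n x, |x| < δ → |s (φ^[n] x)| ≤ (K * δ) * ρ^n := by
    intro n x hx
    obtain ⟨h1, h2⟩ := hit n x hx
    have h3 := (hball' _ h2).2.1
    have h4 : K * |φ^[n] x| ≤ K * (ρ^n * δ) := by
      gcongr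
      exact h1.trans (by gcongr)
    linarith
  have hgeo : Summable (fun n : ℕ => (K * δ) * ρ^n) :=
    (summable_geometric_of_lt_one hρ0.le hρ2).mul_left _
  have hnear : ∀ᶠ x in 𝓝 (0:ℝ), |x| < δ := by
    filter_upwards [Metric.ball_mem_nhds (0:ℝ) hδ] with x hx
    simpa using hx
  have hitc : ∀ n, ContinuousOn (φ^[n]) (Ioo c b) ∧ MapsTo (φ^[n]) (Ioo c b) (Ioo c b) := by
    intro n
    induction n with
    | zero => exact ⟨continuousOn_id, fun x hx => hx⟩
    | succ n ih =>
      rw [Function.iterate_succ]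
      exact ⟨ih.1.comp hcont hmaps, ih.2.comp hmaps⟩
  have hsum : ∀ x ∈ Ioo c b, Summable (fun n => s (φ^[n] x)) := by
    refine aux_reach c b φ hmaps hc hb hcont hanti h0 hper h _ ?_ ?_
    · filter_upwards [hnear] with x hx
      exact Summable.of_norm_bounded hgeo (fun n => hbd n x hx)
    · intro x hx hh
      rw [← summable_nat_add_iff 1]
      simpa [Function.iterate_succ_apply] using hh
  have heq : ∀ x ∈ Ioo c b, (∑' n, s (φ^[n] x)) = s x + ∑' n, s (φ^[n] (φ x)) := by
    intro x hx
    rw [(hsum x hx).tsum_eq_zero_add]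
    simp [Function.iterate_succ_apply]
  refine ⟨fun x => ∑' n, s (φ^[n] x), ?_, heq⟩
  have : ∀ x ∈ Ioo c b, ContinuousAt (fun x => ∑' n, s (φ^[n] x)) x := by
    refine aux_reach c b φ hmaps hc hb hcont hanti h0 hper h _ ?_ ?_
    · have hon : ContinuousOn (fun x => ∑' n, s (φ^[n] x)) (Metric.ball 0 δ) := by
        refine continuousOn_tsum (fun n => ?_) hgeo ?_
        · have hsub : Metric.ball (0:ℝ) δ ⊆ Ioo c b := fun x hx => (hball' x (by simpa using hx)).2.2
          exact (hs.comp (hitc n).1 (hitc n).2).mono hsub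
        · intro n x hx
          exact hbd n x (by simpa using hx)
      filter_upwards [Metric.ball_mem_nhds (0:ℝ) hδ] with x hx
      exact hon.continuousAt (Metric.isOpen_ball.mem_nhds hx)
    · intro x hx hh
      have hn : Ioo c b ∈ 𝓝 x := Ioo_mem_nhds hx.1 hx.2
      have h1 : ContinuousAt (fun x => s x + (fun x => ∑' n, s (φ^[n] x)) (φ x)) x :=
        (hs.continuousAt hn).add (ContinuousAt.comp (f := φ) hh (hcont.continuousAt hn))
      refine h1.congr ?_
      filter_upwards [hn] with y hy
      exact (heq y hy).symm
  exact fun x hx => (this x hx).continuousWithinAt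

lemma aux_contDiff (g g' : ℝ → ℝ) (U : Set ℝ) (hU : IsOpen U)
    (hd : ∀ x ∈ U, HasDerivAt g (g' x) x) (hc : ContinuousOn g' U) : ContDiffOn ℝ 1 g U := by
  rw [contDiffOn_one_iff_derivWithin hU.uniqueDiffOn]
  refine ⟨fun x hx => (hd x hx).differentiableAt.differentiableWithinAt, hc.congr ?_⟩
  intro x hx
  rw [derivWithin_of_isOpen hU hx, (hd x hx).deriv]

lemma aux_inv (F F' G : ℝ → ℝ) (U : Set ℝ) (hU : IsOpen U)
    (hd : ∀ x ∈ U, HasDerivAt F (F' x) x) (hc : ContinuousOn F' U) (hne : ∀ x ∈ U, F' x ≠ 0)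
    (hG : ∀ x ∈ U, G (F x) = x) : ∀ x ∈ U, HasDerivAt G (F' x)⁻¹ (F x) := by
  intro x hx
  have h1 : HasStrictDerivAt F (F' x) x :=
    hasStrictDerivAt_of_hasDerivAt_of_continuousAt
      (by filter_upwards [hU.mem_nhds hx] with y hy using hd y hy) (hc.continuousAt (hU.mem_nhds hx))
  exact (h1.to_local_left_inverse (hne x hx)
    (by filter_upwards [hU.mem_nhds hx] with y hy using hG y hy)).hasDerivAt

lemma aux_core (c b lam : ℝ) (φ φ' : ℝ → ℝ) (hc : c < 0) (hb : 0 < b)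
    (hmaps : ∀ x ∈ Ioo c b, φ x ∈ Ioo c b)
    (hd : ∀ x ∈ Ioo c b, HasDerivAt φ (φ' x) x) (hneg : ∀ x ∈ Ioo c b, φ' x < 0)
    (hcont' : ContinuousOn φ' (Ioo c b)) (hdd : DifferentiableAt ℝ φ' 0)
    (h0 : φ 0 = 0) (hlam : φ' 0 = lam) (hne : lam ≠ -1)
    (hper : ∀ x ∈ Ioo c b, φ (φ x) = x → x = 0) (p q : ℝ) (hp : p ∈ Ioo c b)
    (hq : q ∈ Ioo c b) (hpq : ∀ x ∈ Ioo c b, φ (φ x) ∈ Icc p q) :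
    ∃ c' d' : ℝ, c' < 0 ∧ 0 < d' ∧ ∃ h : ℝ → ℝ, StrictMonoOn h (Ioo c b) ∧
      IsDiffeoOn h (Ioo c b) (Ioo c' d') ∧ ∀ x ∈ Ioo c b, h (φ x) = lam * h x := by
  have h0J : (0:ℝ) ∈ Ioo c b := ⟨hc, hb⟩
  have hcont : ContinuousOn φ (Ioo c b) := fun x hx => (hd x hx).continuousAt.continuousWithinAt
  have hlneg : lam < 0 := hlam ▸ hneg 0 h0J
  have hanti : StrictAntiOn φ (Ioo c b) := by
    refine strictAntiOn_of_deriv_neg (convex_Ioo c b) hcont ?_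
    intro x hx
    rw [interior_Ioo] at hx
    rw [(hd x hx).deriv]
    exact hneg x hx
  have hd0 : HasDerivAt φ lam 0 := hlam ▸ hd 0 h0J
  obtain ⟨hl, hr⟩ := aux_sq c b φ hmaps hc hb hcont hper p q hp hq hpq
  have hl1 := aux_lam b lam φ hb h0 hd0 hr hlneg hne
  have hquot : ∀ x ∈ Ioo c b, 0 < φ' x / lam := fun x hx => div_pos_of_neg_of_neg (hneg x hx) hlneg
  obtain ⟨S, hS, hSeq⟩ := aux_S c b lam φ (fun x => Real.log (φ' x / lam)) hmaps hc hb hcont hanti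
    h0 hper hl hd0 hl1
    ((hcont'.div_const lam).log (fun x hx => (hquot x hx).ne'))
    (by simp [hlam, hlneg.ne])
    ((hdd.div_const lam).log (hquot 0 h0J).ne')
  set u : ℝ → ℝ := fun x => Real.exp (S x) with hu
  have huc : ContinuousOn u (Ioo c b) := hS.rexp
  have hupos : ∀ x, 0 < u x := fun x => Real.exp_pos _
  set h : ℝ → ℝ := fun x => ∫ t in (0:ℝ)..x, u t with hh
  have hhd : ∀ x ∈ Ioo c b, HasDerivAt h (u x) x := by
    intro x hx
    refine intervalIntegral.integral_hasDerivAt_right ?_ ?_ (huc.continuousAt (Ioo_mem_nhds hx.1 hx.2))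
    · refine (huc.mono ?_).intervalIntegrable
      exact ordConnected_Ioo.uIcc_subset h0J hx
    · exact huc.stronglyMeasurableAtFilter isOpen_Ioo x hx
  have hh0 : h 0 = 0 := by simp [hh]
  have hhc : ContinuousOn h (Ioo c b) := fun x hx => (hhd x hx).continuousAt.continuousWithinAt
  have hmono : StrictMonoOn h (Ioo c b) := by
    refine strictMonoOn_of_deriv_pos (convex_Ioo c b) hhc ?_
    intro x hx
    rw [interior_Ioo] at hx
    rw [(hhd x hx).deriv]
    exact hupos x
  have hconj : ∀ x ∈ Ioo c b, h (φ x) = lam * h x := by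
    have d1 : ∀ x ∈ Ioo c b, HasDerivAt (fun x => h (φ x)) (u (φ x) * φ' x) x := fun x hx =>
      (hhd _ (hmaps x hx)).comp x (hd x hx)
    have d2 : ∀ x ∈ Ioo c b, HasDerivAt (fun x => lam * h x) (lam * u x) x := fun x hx =>
      (hhd x hx).const_mul lam
    refine IsOpen.eqOn_of_deriv_eq (𝕜 := ℝ) isOpen_Ioo isPreconnected_Ioo
      (fun x hx => (d1 x hx).differentiableAt.differentiableWithinAt)
      (fun x hx => (d2 x hx).differentiableAt.differentiableWithinAt) ?_ h0J ?_
    · intro x hx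
      rw [(d1 x hx).deriv, (d2 x hx).deriv]
      simp only [hu]
      rw [hSeq x hx, Real.exp_add, Real.exp_log (hquot x hx)]
      field_simp [hlneg.ne]
    · simp [h0, hh0]
  have hbd : ∀ x ∈ Ioo c b, lam * (lam * h x) ∈ Icc (h p) (h q) := by
    intro x hx
    have h2 := hmaps _ (hmaps x hx)
    rw [← hconj x hx, ← hconj _ (hmaps x hx)]
    exact ⟨hmono.monotoneOn hp h2 (hpq x hx).1, hmono.monotoneOn h2 hq (hpq x hx).2⟩
  have hll : 0 < lam * lam := mul_pos_of_neg_of_neg hlneg hlneg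
  have hBA : BddAbove (h '' Ioo c b) := by
    refine ⟨h q / (lam * lam), ?_⟩
    rintro _ ⟨x, hx, rfl⟩
    rw [le_div_iff₀ hll]
    linarith [(hbd x hx).2]
  have hBB : BddBelow (h '' Ioo c b) := by
    refine ⟨h p / (lam * lam), ?_⟩
    rintro _ ⟨x, hx, rfl⟩
    rw [div_le_iff₀ hll]
    linarith [(hbd x hx).1]
  have hC : IsConnected (h '' Ioo c b) := (isConnected_Ioo (hc.trans hb)).image h hhc
  have hmem : ∀ x ∈ Ioo c b, h x ∈ Ioo (sInf (h '' Ioo c b)) (sSup (h '' Ioo c b)) := by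
    intro x hx
    obtain ⟨y, hy1, hy2⟩ := exists_between hx.1
    obtain ⟨z, hz1, hz2⟩ := exists_between hx.2
    have hyJ : y ∈ Ioo c b := ⟨hy1, hy2.trans hx.2⟩
    have hzJ : z ∈ Ioo c b := ⟨hx.1.trans hz1, hz2⟩
    exact ⟨(csInf_le hBB (mem_image_of_mem h hyJ)).trans_lt (hmono hyJ hx hy2),
      (hmono hx hzJ hz1).trans_le (le_csSup hBA (mem_image_of_mem h hzJ))⟩
  have hsurj := hC.Ioo_csInf_csSup_subset hBB hBA
  have h0m := hmem 0 h0J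
  rw [hh0] at h0m
  refine ⟨_, _, h0m.1, h0m.2, h, hmono, ⟨⟨hmem, hmono.injOn, hsurj⟩,
    aux_contDiff h u _ isOpen_Ioo hhd huc, Function.invFunOn h (Ioo c b), ?_, ?_⟩, hconj⟩
  · exact ⟨hmono.injOn.leftInvOn_invFunOn, fun y hy => Function.invFunOn_eq (hsurj hy)⟩
  · set G := Function.invFunOn h (Ioo c b) with hG
    have hGl : ∀ x ∈ Ioo c b, G (h x) = x := hmono.injOn.leftInvOn_invFunOn
    have hinv := aux_inv h u G _ isOpen_Ioo hhd huc (fun x _ => (hupos x).ne') hGl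
    have hGd : ∀ y ∈ Ioo (sInf (h '' Ioo c b)) (sSup (h '' Ioo c b)),
        HasDerivAt G (u (G y))⁻¹ y := by
      intro y hy
      obtain ⟨x, hx, rfl⟩ := hsurj hy
      rw [hGl x hx]
      exact hinv x hx
    refine aux_contDiff G _ _ isOpen_Ioo hGd ?_
    have hGc : ContinuousOn G (Ioo (sInf (h '' Ioo c b)) (sSup (h '' Ioo c b))) :=
      fun y hy => (hGd y hy).continuousAt.continuousWithinAt
    refine ContinuousOn.inv₀ (huc.comp hGc ?_) (fun y _ => (hupos _).ne')
    intro y hy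
    obtain ⟨x, hx, rfl⟩ := hsurj hy
    rw [hGl x hx]
    exact hx

/-- Global linearisation, decreasing case (Lemma 4.3).
`c₀` is the unique point of `(a,b)` mapped to `b` by `f`, i.e. `f⁻¹(b)`. -/
theorem stmt5 (a b lam c₀ : ℝ) (f : ℝ → ℝ)
    (ha : a < 0) (hb : 0 < b)
    (hf : ContDiffOn ℝ 2 f (Set.Icc a b))
    (hfd : ∀ x ∈ Set.Ioo a b, deriv f x < 0)
    (hfix : f 0 = 0)
    (hlam : deriv f 0 = lam) (hlam1 : lam ≠ -1)
    (hper2 : ∀ x ∈ Set.Ioo a b, f (f x) = x → x = 0)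
    (hbfa : b < f a)
    (hc₀ : c₀ ∈ Set.Ioo a b) (hfc₀ : f c₀ = b) :
    ∃ c d : ℝ, c < 0 ∧ 0 < d ∧
      ∃ h : ℝ → ℝ, StrictMonoOn h (Set.Ioo c₀ b) ∧
        IsDiffeoOn h (Set.Ioo c₀ b) (Set.Ioo c d) ∧
        ConjRelOn h f (fun y => lam * y) (Set.Ioo c₀ b) := by
  have hcont : ContinuousOn f (Icc a b) := hf.continuousOn
  have hanti : StrictAntiOn f (Icc a b) :=
    strictAntiOn_of_deriv_neg (convex_Icc a b) hcont (by rwa [interior_Icc])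
  have hd : ∀ x ∈ Ioo a b, HasDerivAt f (deriv f x) x := fun x hx =>
    (differentiableAt_of_deriv_ne_zero (hfd x hx).ne).hasDerivAt
  have hd1 : ContDiffOn ℝ 1 (deriv f) (Ioo a b) :=
    (hf.mono Ioo_subset_Icc_self).deriv_of_isOpen isOpen_Ioo (by norm_num)
  have hdc : ContinuousOn (deriv f) (Ioo a b) := hd1.continuousOn
  have h0I : (0:ℝ) ∈ Ioo a b := ⟨ha, hb⟩
  have hdd : DifferentiableAt ℝ (deriv f) 0 :=
    (hd1.differentiableOn (by norm_num)).differentiableAt (Ioo_mem_nhds ha hb)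
  have h0c : (0:ℝ) ∈ Icc a b := ⟨ha.le, hb.le⟩
  have hcc : c₀ ∈ Icc a b := Ioo_subset_Icc_self hc₀
  have hbc : b ∈ Icc a b := ⟨(ha.trans hb).le, le_rfl⟩
  have hlneg : lam < 0 := hlam ▸ hfd 0 h0I
  have hcneg : c₀ < 0 := by
    rw [← hanti.lt_iff_gt h0c hcc, hfix, hfc₀]; exact hb
  have hsub : Ioo c₀ b ⊆ Ioo a b := Ioo_subset_Ioo_left hc₀.1.le
  have hsubc : Ioo c₀ b ⊆ Icc a b := hsub.trans Ioo_subset_Icc_self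
  rcases lt_trichotomy (f b) c₀ with hlt | heq | hgt
  · -- repelling case
    obtain ⟨e, he, hfe⟩ := intermediate_value_Ioo' hb.le
      (hcont.mono (Icc_subset_Icc_left ha.le)) (show c₀ ∈ Ioo (f b) (f 0) from ⟨hlt, by rwa [hfix]⟩)
    have hce : c₀ < e := hcneg.trans he.1
    have hsube : Icc c₀ e ⊆ Icc a b := Icc_subset_Icc hc₀.1.le he.2.le
    set G := Function.invFunOn f (Icc a b) with hG
    have hGl : ∀ x ∈ Icc a b, G (f x) = x := hanti.injOn.leftInvOn_invFunOn
    have hsurj : ∀ y ∈ Ioo c₀ b, ∃ x ∈ Ioo c₀ e, f x = y := by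
      intro y hy
      exact intermediate_value_Ioo' hce.le (hcont.mono hsube)
        (show y ∈ Ioo (f e) (f c₀) by rwa [hfe, hfc₀])
    have hGm : ∀ y ∈ Ioo c₀ b, G y ∈ Ioo c₀ e ∧ f (G y) = y := by
      intro y hy
      obtain ⟨x, hx, rfl⟩ := hsurj y hy
      rw [hGl x (hsube (Ioo_subset_Icc_self hx))]
      exact ⟨hx, rfl⟩
    have hmaps : ∀ y ∈ Ioo c₀ b, G y ∈ Ioo c₀ b := fun y hy =>
      ⟨(hGm y hy).1.1, (hGm y hy).1.2.trans he.2⟩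
    have hinv := aux_inv f (deriv f) G _ isOpen_Ioo hd hdc (fun x hx => (hfd x hx).ne)
      (fun x hx => hGl x (Ioo_subset_Icc_self hx))
    have hGd : ∀ y ∈ Ioo c₀ b, HasDerivAt G (deriv f (G y))⁻¹ y := by
      intro y hy
      have := hinv (G y) (hsub (hmaps y hy))
      rwa [(hGm y hy).2] at this
    have hG0 : G 0 = 0 := by
      have := hGl 0 h0c
      rwa [hfix] at this
    have h0J : (0:ℝ) ∈ Ioo c₀ b := ⟨hcneg, hb⟩
    have heJ : e ∈ Ioo c₀ b := ⟨hce, he.2⟩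
    obtain ⟨c, d, hcn, hdp, h, h1, h2, h3⟩ := aux_core c₀ b lam⁻¹ G (fun y => (deriv f (G y))⁻¹)
      hcneg hb hmaps hGd (fun y hy => inv_lt_zero.2 (hfd _ (hsub (hmaps y hy))))
      (ContinuousOn.inv₀ (hdc.comp (fun y hy => (hGd y hy).continuousAt.continuousWithinAt)
        (fun y hy => hsub (hmaps y hy))) (fun y hy => (hfd _ (hsub (hmaps y hy))).ne))
      (by
        refine DifferentiableAt.fun_inv ?_ ?_
        · refine DifferentiableAt.fun_comp' 0 ?_ (hGd 0 h0J).differentiableAt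
          rwa [hG0]
        · rw [hG0]; exact (hfd 0 h0I).ne)
      hG0 (by simp only [hG0, hlam])
      (fun hh => hlam1 (by rw [← inv_inv lam, hh]; norm_num))
      (by
        intro y hy hyy
        have e1 := (hGm _ (hmaps y hy)).2
        rw [hyy] at e1
        refine hper2 y (hsub hy) ?_
        rw [e1]; exact (hGm y hy).2)
      (G e) e (hmaps e heJ) heJ
      (by
        intro y hy
        have e1 := hGm _ (hmaps y hy)
        refine ⟨?_, e1.1.2.le⟩
        rw [← hanti.le_iff_ge (hsubc (hmaps _ (hmaps y hy))) (hsubc (hmaps e heJ)), e1.2, (hGm e heJ).2]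
        exact (hGm y hy).1.2.le)
    refine ⟨c, d, hcn, hdp, h, h1, h2, ?_⟩
    intro x hx hfx
    have := h3 (f x) hfx
    rw [hGl x (hsubc hx)] at this
    simp only [this]
    field_simp [hlneg.ne]
  · exfalso
    have := hper2 c₀ hc₀ (by rw [hfc₀, heq])
    linarith
  · -- attracting case
    have hmaps : ∀ x ∈ Ioo c₀ b, f x ∈ Ioo c₀ b := fun x hx =>
      ⟨hgt.trans (hanti (hsubc hx) hbc hx.2), hfc₀ ▸ hanti hcc (hsubc hx) hx.1⟩
    have hfb : f b ∈ Ioo c₀ b := ⟨hgt, by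
      have := hanti h0c hbc hb
      linarith⟩
    obtain ⟨c, d, hcn, hdp, h, h1, h2, h3⟩ := aux_core c₀ b lam f (deriv f) hcneg hb hmaps
      (fun x hx => hd x (hsub hx)) (fun x hx => hfd x (hsub hx)) (hdc.mono hsub) hdd hfix hlam hlam1
      (fun x hx => hper2 x (hsub hx)) (f b) (f (f b)) hfb (hmaps _ hfb)
      (by
        intro x hx
        have hfx := hmaps x hx
        exact ⟨(hanti (hsubc hfx) hbc hfx.2).le,
          (hanti (hsubc hfb) (hsubc hfx) (hanti (hsubc hx) hbc hx.2)).le⟩)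
    exact ⟨c, d, hcn, hdp, h, h1, h2, fun x hx _ => h3 x hx⟩
end

section
/- Let f : (a,b) → ℝ be C² with f′(x) < 0 for all x ∈ (a,b) and b < f(a). Suppose x* ∈ (a,b) is a fixed point of f with f′(x*) = λ ≠ −1 and f∘f has no fixed points other than x*. Let g : (c,d) → ℝ be C² with g′(y) < 0 for all y ∈ (c,d) and d < g(c). Suppose y* ∈ (c,d) is a fixed point of g with g′(y*) = λ and g∘g has no fixed points other than y*. Then there exists an increasing C¹ diffeomorphism h : (f⁻¹(b), b) → (g⁻¹(d), d) such that h(f(x)) = g(h(x)) for all x ∈ (f⁻¹(b), b) with f(x) ∈ (f⁻¹(b), b). -/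
section
open Set Filter Topology

lemma lin_S (u v p th : ℝ) (H G : ℝ → ℝ) (hp : p ∈ Ioo u v) (hth0 : 0 ≤ th) (hth1 : th < 1)
    (hcon : ∀ x ∈ Ioo u v, |H x - p| ≤ th * |x - p|)
    (hbet : ∀ x ∈ Ioo u v, H x ∈ uIcc p x)
    (hHc : ContinuousOn H (Ioo u v))
    (hG : ContinuousOn G (Ioo u v)) (hGp : G p = 0) (hGd : DifferentiableAt ℝ G p) :
    ∃ S : ℝ → ℝ, ContinuousOn S (Ioo u v) ∧ ∀ x ∈ Ioo u v, S x = G x + S (H x) := by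
  have hinv : ∀ x1 x2, u < x1 → x1 ≤ p → p ≤ x2 → x2 < v →
      ∀ n : ℕ, ∀ x ∈ Icc x1 x2, H^[n] x ∈ Icc x1 x2 ∧ |H^[n] x - p| ≤ th ^ n * |x - p| := by
    intro x1 x2 h1 h2 h3 h4 n x hx
    induction n with
    | zero => simpa using hx
    | succ n ih =>
      rw [Function.iterate_succ_apply']
      obtain ⟨i1, i2⟩ := ih
      have hy : H^[n] x ∈ Ioo u v := ⟨by linarith [i1.1], by linarith [i1.2]⟩
      refine ⟨?_, ?_⟩
      · have := hbet _ hy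
        exact (uIcc_subset_Icc ⟨h2, h3⟩ i1) this
      · calc _ ≤ th * |H^[n] x - p| := hcon _ hy
          _ ≤ th * (th ^ n * |x - p|) := by gcongr
          _ = _ := by ring
  have key : ∀ x1 x2, u < x1 → x1 < p → p < x2 → x2 < v →
      ∃ C : ℝ, ∀ n : ℕ, ∀ x ∈ Icc x1 x2, ‖G (H^[n] x)‖ ≤ C * th ^ n := by
    intro x1 x2 h1 h2 h3 h4
    have hsub : Icc x1 x2 ⊆ Ioo u v := fun y hy => ⟨by linarith [hy.1], by linarith [hy.2]⟩
    have hD : ContinuousOn (dslope G p) (Icc x1 x2) :=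
      (continuousOn_dslope (Icc_mem_nhds h2 h3)).2 ⟨hG.mono hsub, hGd⟩
    obtain ⟨C, hC⟩ := isCompact_Icc.exists_bound_of_continuousOn hD
    have hC0 : 0 ≤ C := (norm_nonneg _).trans (hC p ⟨h2.le, h3.le⟩)
    refine ⟨C * (x2 - x1), fun n x hx => ?_⟩
    obtain ⟨i1, i2⟩ := hinv x1 x2 h1 h2.le h3.le h4 n x hx
    have e : G (H^[n] x) = (H^[n] x - p) * dslope G p (H^[n] x) := by
      have := sub_smul_dslope G p (H^[n] x)
      rw [hGp] at this
      simpa using this.symm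
    rw [e, norm_mul, Real.norm_eq_abs]
    have hx' : |x - p| ≤ x2 - x1 := by rw [abs_le]; constructor <;> linarith [hx.1, hx.2]
    calc _ ≤ (th ^ n * (x2 - x1)) * C := by
          apply mul_le_mul (i2.trans (by gcongr)) (hC _ i1) (norm_nonneg _)
          have : 0 ≤ x2 - x1 := by linarith
          positivity
      _ = _ := by ring
  have hbox : ∀ x ∈ Ioo u v, ∃ x1 x2, u < x1 ∧ x1 < p ∧ p < x2 ∧ x2 < v ∧ x1 < x ∧ x < x2 := by
    intro x hx
    obtain ⟨x1, h1, h1'⟩ := exists_between (lt_min hx.1 hp.1)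
    obtain ⟨x2, h2, h2'⟩ := exists_between (max_lt hx.2 hp.2)
    rw [lt_min_iff] at h1'
    rw [max_lt_iff] at h2
    exact ⟨x1, x2, h1, h1'.2, h2.2, h2', h1'.1, h2.1⟩
  refine ⟨fun x => ∑' n : ℕ, G (H^[n] x), ?_, ?_⟩
  · intro x hx
    obtain ⟨x1, x2, h1, h2, h3, h4, h5, h6⟩ := hbox x hx
    obtain ⟨C, hC⟩ := key x1 x2 h1 h2 h3 h4
    have hsub : Icc x1 x2 ⊆ Ioo u v := fun y hy => ⟨by linarith [hy.1], by linarith [hy.2]⟩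
    have hmaps : MapsTo H (Icc x1 x2) (Icc x1 x2) := fun y hy => by
      simpa using (hinv x1 x2 h1 h2.le h3.le h4 1 y hy).1
    have : ContinuousOn (fun x => ∑' n : ℕ, G (H^[n] x)) (Icc x1 x2) := by
      refine continuousOn_tsum (fun n => ?_)
        ((summable_geometric_of_lt_one hth0 hth1).mul_left C) hC
      exact (hG.mono hsub).comp ((hHc.mono hsub).iterate hmaps n) (hmaps.iterate n)
    exact (this.continuousAt (Icc_mem_nhds h5 h6)).continuousWithinAt
  · intro x hx
    obtain ⟨x1, x2, h1, h2, h3, h4, h5, h6⟩ := hbox x hx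
    obtain ⟨C, hC⟩ := key x1 x2 h1 h2 h3 h4
    have hs : Summable (fun n : ℕ => G (H^[n] x)) :=
      Summable.of_norm_bounded ((summable_geometric_of_lt_one hth0 hth1).mul_left C)
        (fun n => hC n x ⟨h5.le, h6.le⟩)
    have := hs.tsum_eq_zero_add
    simpa [Function.iterate_succ_apply] using this

lemma lin_H (u v p m th : ℝ) (H H' : ℝ → ℝ) (hp : p ∈ Ioo u v) (hth0 : 0 ≤ th) (hth1 : th < 1)
    (hm : 0 < m)
    (hcon : ∀ x ∈ Ioo u v, |H x - p| ≤ th * |x - p|)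
    (hbet : ∀ x ∈ Ioo u v, H x ∈ uIcc p x)
    (hHp : H p = p)
    (hHI : ∀ x ∈ Icc u v, H x ∈ Ioo u v)
    (hHc : ContinuousOn H (Icc u v))
    (hHd : ∀ x ∈ Ioo u v, HasDerivAt H (H' x) x)
    (hH'0 : ∀ x ∈ Ioo u v, 0 < H' x)
    (hH'c : ContinuousOn H' (Ioo u v)) (hH'p : H' p = m) (hH'd : DifferentiableAt ℝ H' p) :
    ∃ φ ψ : ℝ → ℝ, ContinuousOn φ (Icc u v) ∧ (∀ x ∈ Ioo u v, HasDerivAt φ (ψ x) x) ∧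
      (∀ x ∈ Ioo u v, 0 < ψ x) ∧ ContinuousOn ψ (Ioo u v) ∧
      (∀ x ∈ Icc u v, φ (H x) = m * φ x) ∧ φ p = 0 := by
  obtain ⟨S, hSc, hS⟩ := lin_S u v p th H (fun x => Real.log (H' x / m)) hp hth0 hth1 hcon hbet
    (hHc.mono Ioo_subset_Icc_self)
    ((hH'c.div_const m).log (fun x hx => (div_pos (hH'0 x hx) hm).ne'))
    (by simp [hH'p, hm.ne'])
    ((hH'd.div_const m).log (div_pos (hH'0 p hp) hm).ne')
  set ψ : ℝ → ℝ := fun x => Real.exp (S x) with hψ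
  have hψc : ContinuousOn ψ (Ioo u v) := hSc.rexp
  have hψH : ∀ x ∈ Ioo u v, ψ (H x) * H' x = m * ψ x := by
    intro x hx
    simp only [hψ]
    rw [hS x hx, Real.exp_add, Real.exp_log (div_pos (hH'0 x hx) hm)]
    field_simp
  set Φ : ℝ → ℝ := fun x => ∫ t in p..x, ψ t with hΦ
  have hΦd : ∀ x ∈ Ioo u v, HasDerivAt Φ (ψ x) x := by
    intro x hx
    have hsub : uIcc p x ⊆ Ioo u v := (ordConnected_Ioo).uIcc_subset hp hx
    exact intervalIntegral.integral_hasDerivAt_right (hψc.mono hsub).intervalIntegrable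
      (hψc.stronglyMeasurableAtFilter isOpen_Ioo x hx) (hψc.continuousAt (isOpen_Ioo.mem_nhds hx))
  have hΦp : Φ p = 0 := by simp [hΦ]
  have hΦHd : ∀ x ∈ Ioo u v, HasDerivAt (fun x => Φ (H x)) (m * ψ x) x := by
    intro x hx
    rw [← hψH x hx]
    exact (hΦd (H x) (hHI x (Ioo_subset_Icc_self hx))).comp x (hHd x hx)
  have hΦH : ∀ x ∈ Ioo u v, Φ (H x) = m * Φ x := by
    intro x hx
    have hdd : ∀ y ∈ Ioo u v, HasDerivAt (fun x => Φ (H x) - m * Φ x) 0 y := by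
      intro y hy
      have := (hΦHd y hy).sub ((hΦd y hy).const_mul m)
      rw [sub_self] at this
      exact this
    have := isOpen_Ioo.is_const_of_deriv_eq_zero isPreconnected_Ioo
      (fun y hy => (hdd y hy).differentiableAt.differentiableWithinAt)
      (fun y hy => (hdd y hy).deriv) hx hp
    simp only [hHp, hΦp] at this
    linarith
  have hΦc : ContinuousOn Φ (Ioo u v) := fun x hx => (hΦd x hx).continuousAt.continuousWithinAt
  refine ⟨fun x => m⁻¹ * Φ (H x), ψ, ?_, ?_, fun x _ => Real.exp_pos _, hψc, ?_, ?_⟩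
  · exact continuousOn_const.mul (hΦc.comp hHc hHI)
  · intro x hx
    have := (hΦHd x hx).const_mul m⁻¹
    rwa [inv_mul_cancel_left₀ hm.ne'] at this
  · intro x hx
    simp only
    rw [hΦH (H x) (hHI x hx)]
    field_simp
  · simp [hHp, hΦp]

lemma lin_F (u v p mu : ℝ) (F F' : ℝ → ℝ) (hp : p ∈ Ioo u v)
    (hmu0 : mu < 0) (hmu1 : -1 < mu) (hFp : F p = p)
    (hFI : ∀ x ∈ Icc u v, F x ∈ Icc u v)
    (hFc : ContinuousOn F (Icc u v))
    (hFa : StrictAntiOn F (Icc u v))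
    (hFd : ∀ x ∈ Ioo u v, HasDerivAt F (F' x) x)
    (hF'0 : ∀ x ∈ Ioo u v, F' x < 0)
    (hF'c : ContinuousOn F' (Ioo u v)) (hF'p : F' p = mu) (hF'd : DifferentiableAt ℝ F' p)
    (hper : ∀ x ∈ Icc u v, F (F x) = x → x = p) :
    ∃ φ ψ : ℝ → ℝ, ContinuousOn φ (Icc u v) ∧ (∀ x ∈ Ioo u v, HasDerivAt φ (ψ x) x) ∧
      (∀ x ∈ Ioo u v, 0 < ψ x) ∧ ContinuousOn ψ (Ioo u v) ∧
      (∀ x ∈ Icc u v, φ (F x) = mu * φ x) ∧ φ p = 0 := by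
  have hpI := Ioo_subset_Icc_self hp
  have huI : u ∈ Icc u v := ⟨le_rfl, (hp.1.trans hp.2).le⟩
  have hvI : v ∈ Icc u v := ⟨(hp.1.trans hp.2).le, le_rfl⟩
  have hFo : ∀ x ∈ Ioo u v, F x ∈ Ioo u v := by
    intro x hx
    have hxI := Ioo_subset_Icc_self hx
    exact ⟨(hFI v hvI).1.trans_lt (hFa hxI hvI hx.2), (hFa huI hxI hx.1).trans_le (hFI u huI).2⟩
  set H : ℝ → ℝ := fun x => F (F x) with hH
  set H' : ℝ → ℝ := fun x => F' (F x) * F' x with hH'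
  have hHp : H p = p := by simp [hH, hFp]
  have hHc : ContinuousOn H (Icc u v) := hFc.comp hFc hFI
  have hHm : StrictMonoOn H (Icc u v) := fun x hx y hy hxy =>
    hFa (hFI y hy) (hFI x hx) (hFa hx hy hxy)
  have hHd : ∀ x ∈ Ioo u v, HasDerivAt H (H' x) x := fun x hx =>
    (hFd (F x) (hFo x hx)).comp x (hFd x hx)
  have hH'0 : ∀ x ∈ Ioo u v, 0 < H' x := fun x hx =>
    mul_pos_of_neg_of_neg (hF'0 _ (hFo x hx)) (hF'0 x hx)
  have hH'p : H' p = mu * mu := by simp [hH', hFp, hF'p]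
  have hDc : ContinuousOn (dslope H p) (Icc u v) :=
    (continuousOn_dslope (Icc_mem_nhds hp.1 hp.2)).2 ⟨hHc, (hHd p hp).differentiableAt⟩
  have hDp : dslope H p p = mu * mu := by rw [dslope_same, (hHd p hp).deriv, hH'p]
  have hDe : ∀ x, H x - p = (x - p) * dslope H p x := by
    intro x
    have := sub_smul_dslope H p x
    rw [hHp] at this
    simpa using this.symm
  have hDne : ∀ x ∈ Icc u v, dslope H p x ≠ 1 := by
    intro x hx h1
    have h2 := hDe x
    rw [h1] at h2
    have h3 : x = p := hper x hx (by change H x = x; linarith)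
    rw [h3, hDp] at h1
    nlinarith
  have hD1 : ∀ x ∈ Icc u v, dslope H p x < 1 := by
    intro x hx
    by_contra hcon
    push Not at hcon
    obtain ⟨y, hy, hy1⟩ := isPreconnected_Icc.intermediate_value hpI hx hDc
      (show (1:ℝ) ∈ Icc (dslope H p p) (dslope H p x) from ⟨by rw [hDp]; nlinarith, hcon⟩)
    exact hDne y hy hy1
  have hD0 : ∀ x ∈ Icc u v, 0 ≤ dslope H p x := by
    intro x hx
    rcases lt_trichotomy x p with h | h | h
    · have h1 := hHm hx hpI h
      rw [hHp] at h1
      have := hDe x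
      by_contra hc
      push Not at hc
      nlinarith
    · rw [h, hDp]; nlinarith
    · have h1 := hHm hpI hx h
      rw [hHp] at h1
      have := hDe x
      by_contra hc
      push Not at hc
      nlinarith
  obtain ⟨z, hz, hzmax⟩ := isCompact_Icc.exists_isMaxOn ⟨p, hpI⟩ hDc
  set th := dslope H p z
  have hcon : ∀ x ∈ Ioo u v, |H x - p| ≤ th * |x - p| := by
    intro x hx
    have hxI := Ioo_subset_Icc_self hx
    rw [hDe, abs_mul, abs_of_nonneg (hD0 x hxI), mul_comm]
    exact mul_le_mul_of_nonneg_right (hzmax hxI) (abs_nonneg _)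
  have hbet : ∀ x ∈ Ioo u v, H x ∈ uIcc p x := by
    intro x hx
    have hxI := Ioo_subset_Icc_self hx
    have h0 := hD0 x hxI
    have h1 := hD1 x hxI
    have h2 := hDe x
    rw [mem_uIcc]
    rcases le_total x p with h | h
    · right; constructor <;> nlinarith
    · left; constructor <;> nlinarith
  have hHu : u < H u := by
    have := hD1 u huI
    have h2 := hDe u
    nlinarith [hp.1]
  have hHv : H v < v := by
    have := hD1 v hvI
    have h2 := hDe v
    nlinarith [hp.2]
  have hHI : ∀ x ∈ Icc u v, H x ∈ Ioo u v := fun x hx =>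
    ⟨hHu.trans_le (hHm.monotoneOn huI hx hx.1), (hHm.monotoneOn hx hvI hx.2).trans_lt hHv⟩
  have hFco := hFc.mono Ioo_subset_Icc_self
  obtain ⟨φ, ψ, hφc, hφd, hψ0, hψc, hφH, hφp⟩ := lin_H u v p (mu * mu) th H H' hp (hD0 z hz)
    (hD1 z hz) (mul_pos_of_neg_of_neg hmu0 hmu0) hcon hbet hHp hHI hHc hHd hH'0
    ((hF'c.comp hFco hFo).mul hF'c) hH'p
    (by
      refine DifferentiableAt.mul ?_ hF'd
      refine DifferentiableAt.comp (g := F') p ?_ (hFd p hp).differentiableAt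
      rwa [hFp])
  refine ⟨fun x => φ x + mu⁻¹ * φ (F x), fun x => ψ x + mu⁻¹ * (ψ (F x) * F' x), ?_, ?_, ?_, ?_,
    ?_, ?_⟩
  · exact hφc.add (continuousOn_const.mul (hφc.comp hFc hFI))
  · intro x hx
    exact (hφd x hx).add (((hφd _ (hFo x hx)).comp x (hFd x hx)).const_mul _)
  · intro x hx
    have h1 := mul_neg_of_pos_of_neg (hψ0 _ (hFo x hx)) (hF'0 x hx)
    have h2 := mul_pos_of_neg_of_neg (inv_lt_zero.2 hmu0) h1
    linarith [hψ0 x hx]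
  · exact hψc.add (continuousOn_const.mul ((hψc.comp hFco hFo).mul hF'c))
  · intro x hx
    have := hφH x hx
    simp only [hH] at this
    simp only [this]
    have hne := hmu0.ne
    field_simp
    ring
  · simp [hφp, hFp]

lemma smono_of (u v : ℝ) (φ ψ : ℝ → ℝ) (hc : ContinuousOn φ (Icc u v))
    (hd : ∀ x ∈ Ioo u v, HasDerivAt φ (ψ x) x) (h0 : ∀ x ∈ Ioo u v, 0 < ψ x) :
    StrictMonoOn φ (Icc u v) := by
  refine strictMonoOn_of_deriv_pos (convex_Icc u v) hc (fun x hx => ?_)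
  rw [interior_Icc] at hx
  rw [(hd x hx).deriv]
  exact h0 x hx

lemma cd1_of (s : Set ℝ) (hs : IsOpen s) (φ ψ : ℝ → ℝ)
    (hd : ∀ x ∈ s, HasDerivAt φ (ψ x) x) (hc : ContinuousOn ψ s) : ContDiffOn ℝ 1 φ s := by
  have h := (contDiffOn_succ_iff_deriv_of_isOpen (𝕜 := ℝ) (n := 0) (f := φ) hs).2
    ⟨fun x hx => (hd x hx).differentiableAt.differentiableWithinAt, by simp, by
      rw [contDiffOn_zero]
      exact hc.congr (fun x hx => (hd x hx).deriv)⟩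
  simpa using h

lemma inv_of (u v : ℝ) (φ ψ : ℝ → ℝ) (huv : u < v) (hc : ContinuousOn φ (Icc u v))
    (hd : ∀ x ∈ Ioo u v, HasDerivAt φ (ψ x) x) (h0 : ∀ x ∈ Ioo u v, 0 < ψ x)
    (hψ : ContinuousOn ψ (Ioo u v)) :
    ∃ χ : ℝ → ℝ, (∀ y ∈ Ioo (φ u) (φ v), χ y ∈ Ioo u v ∧ φ (χ y) = y) ∧
      (∀ x ∈ Ioo u v, φ x ∈ Ioo (φ u) (φ v) ∧ χ (φ x) = x) ∧
      ContDiffOn ℝ 1 χ (Ioo (φ u) (φ v)) := by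
  have hm := smono_of u v φ ψ hc hd h0
  have huI : u ∈ Icc u v := ⟨le_rfl, huv.le⟩
  have hvI : v ∈ Icc u v := ⟨huv.le, le_rfl⟩
  set χ := Function.invFunOn φ (Ioo u v)
  have hex : ∀ y ∈ Ioo (φ u) (φ v), ∃ x ∈ Ioo u v, φ x = y := fun y hy =>
    intermediate_value_Ioo huv.le hc hy
  have h1 : ∀ y ∈ Ioo (φ u) (φ v), χ y ∈ Ioo u v ∧ φ (χ y) = y := fun y hy =>
    Function.invFunOn_pos (hex y hy)
  have h2 : ∀ x ∈ Ioo u v, φ x ∈ Ioo (φ u) (φ v) ∧ χ (φ x) = x := by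
    intro x hx
    have hxI := Ioo_subset_Icc_self hx
    have h3 : φ x ∈ Ioo (φ u) (φ v) := ⟨hm huI hxI hx.1, hm hxI hvI hx.2⟩
    exact ⟨h3, hm.injOn (Ioo_subset_Icc_self (h1 _ h3).1) hxI (h1 _ h3).2⟩
  have hχd : ∀ y ∈ Ioo (φ u) (φ v), HasDerivAt χ (ψ (χ y))⁻¹ y := by
    intro y hy
    obtain ⟨i1, i2⟩ := h1 y hy
    have hs : HasStrictDerivAt φ (ψ (χ y)) (χ y) :=
      hasStrictDerivAt_of_hasDerivAt_of_continuousAt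
        (by filter_upwards [isOpen_Ioo.mem_nhds i1] with x hx using hd x hx)
        (hψ.continuousAt (isOpen_Ioo.mem_nhds i1))
    have := hs.to_local_left_inverse (g := χ) (h0 _ i1).ne'
      (by filter_upwards [isOpen_Ioo.mem_nhds i1] with x hx using (h2 x hx).2)
    rw [i2] at this
    exact this.hasDerivAt
  refine ⟨χ, h1, h2, cd1_of _ isOpen_Ioo χ _ hχd ?_⟩
  have hχc : ContinuousOn χ (Ioo (φ u) (φ v)) := fun y hy =>
    (hχd y hy).continuousAt.continuousWithinAt
  exact (hψ.comp hχc (fun y hy => (h1 y hy).1)).inv₀ (fun y hy => (h0 _ (h1 y hy).1).ne')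

lemma side (a b lam xs fb : ℝ) (f : ℝ → ℝ)
    (hf : ContDiffOn ℝ 2 f (Set.Icc a b))
    (hfd : ∀ x ∈ Set.Ioo a b, deriv f x < 0)
    (hxs : xs ∈ Set.Ioo a b) (hfxs : f xs = xs)
    (hlam : deriv f xs = lam) (hlam1 : lam ≠ -1)
    (hfper2 : ∀ x ∈ Set.Ioo a b, f (f x) = x → x = xs)
    (hfb : fb ∈ Set.Ioo a b) (hffb : f fb = b) :
    xs ∈ Ioo fb b ∧
    ∃ φ ψ : ℝ → ℝ, ContinuousOn φ (Icc fb b) ∧ (∀ x ∈ Ioo fb b, HasDerivAt φ (ψ x) x) ∧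
      (∀ x ∈ Ioo fb b, 0 < ψ x) ∧ ContinuousOn ψ (Ioo fb b) ∧ φ xs = 0 ∧
      (∀ x ∈ Icc fb b, f x ∈ Icc fb b → φ (f x) = lam * φ x) ∧
      (∀ x ∈ Ioo fb b, ∀ t ∈ Ioo fb b, φ t = lam * φ x → f x = t) := by
  have hoc : Ioo a b ⊆ Icc a b := Ioo_subset_Icc_self
  have hab : a < b := hxs.1.trans hxs.2
  have hbI : b ∈ Icc a b := ⟨hab.le, le_rfl⟩
  have hfc : ContinuousOn f (Icc a b) := hf.continuousOn
  have hanti : StrictAntiOn f (Icc a b) := by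
    refine strictAntiOn_of_deriv_neg (convex_Icc a b) hfc (fun x hx => ?_)
    rw [interior_Icc] at hx
    exact hfd x hx
  have hfo : ContDiffOn ℝ 2 f (Ioo a b) := hf.mono hoc
  have hd1 : ContDiffOn ℝ 1 (deriv f) (Ioo a b) := hfo.deriv_of_isOpen isOpen_Ioo (by norm_num)
  have hdc : ContinuousOn (deriv f) (Ioo a b) := hd1.continuousOn
  have hdd : ∀ x ∈ Ioo a b, DifferentiableAt ℝ (deriv f) x := fun x hx =>
    (hd1.differentiableOn one_ne_zero).differentiableAt (isOpen_Ioo.mem_nhds hx)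
  have hder : ∀ x ∈ Ioo a b, HasDerivAt f (deriv f x) x := fun x hx =>
    ((hfo.differentiableOn two_ne_zero).differentiableAt (isOpen_Ioo.mem_nhds hx)).hasDerivAt
  have hlam0 : lam < 0 := hlam ▸ hfd xs hxs
  have hxfb : fb < xs := by
    by_contra hc
    push Not at hc
    have := hanti.antitoneOn (hoc hxs) (hoc hfb) hc
    rw [hffb, hfxs] at this
    linarith [hxs.2]
  have hxsU : xs ∈ Ioo fb b := ⟨hxfb, hxs.2⟩
  have hUI : Icc fb b ⊆ Icc a b := Icc_subset_Icc_left hfb.1.le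
  have hUo : Ioo fb b ⊆ Ioo a b := Ioo_subset_Ioo_left hfb.1.le
  refine ⟨hxsU, ?_⟩
  -- the dichotomy
  set D := dslope (fun x => f (f x)) xs with hDdef
  have hffd : HasDerivAt (fun x => f (f x)) (lam * lam) xs := by
    have h1 := hder xs hxs
    rw [hlam] at h1
    have h2 : HasDerivAt f lam (f xs) := by rw [hfxs]; exact h1
    exact h2.comp xs h1
  have hDp : D xs = lam * lam := by rw [hDdef, dslope_same, hffd.deriv]
  have hDe : ∀ x, f (f x) - xs = (x - xs) * D x := by
    intro x
    have := sub_smul_dslope (fun x => f (f x)) xs x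
    simp only [hfxs] at this
    simpa using this.symm
  have hlamsq : lam * lam ≠ 1 := by
    intro h
    have : (lam - 1) * (lam + 1) = 0 := by linarith
    rcases mul_eq_zero.1 this with h | h
    · linarith
    · exact hlam1 (by linarith)
  have hLI : Icc fb xs ⊆ Icc a b := Icc_subset_Icc hfb.1.le hxs.2.le
  have hfL : ∀ x ∈ Icc fb xs, f x ∈ Icc a b := by
    intro x hx
    have h1 := hanti.antitoneOn (hLI hx) (hoc hxs) hx.2
    have h2 := hanti.antitoneOn (hoc hfb) (hLI hx) hx.1
    rw [hfxs] at h1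
    rw [hffb] at h2
    exact ⟨by linarith [hxs.1], h2⟩
  have hDc : ContinuousOn D (Icc fb xs) := by
    intro x hx
    by_cases hxx : x = xs
    · subst hxx
      exact (continuousAt_dslope_same.2 hffd.differentiableAt).continuousWithinAt
    · rw [hDdef, continuousWithinAt_dslope_of_ne hxx]
      exact (hfc.comp (hfc.mono hLI) hfL) x hx
  have hDne : ∀ x ∈ Icc fb xs, D x ≠ 1 := by
    intro x hx h1
    have h2 := hDe x
    rw [h1] at h2
    have h3 := hfper2 x ⟨by linarith [hx.1, hfb.1], by linarith [hx.2, hxs.2]⟩ (by linarith)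
    rw [h3, hDp] at h1
    exact hlamsq h1
  have hL1 : fb ∈ Icc fb xs := ⟨le_rfl, hxfb.le⟩
  have hL2 : xs ∈ Icc fb xs := ⟨hxfb.le, le_rfl⟩
  have hDfb := hDe fb
  rw [hffb] at hDfb
  rcases lt_or_gt_of_ne hlamsq with hl | hl
  · -- attracting
    have hD1 : D fb < 1 := by
      by_contra hc
      push Not at hc
      obtain ⟨y, hy, hy1⟩ := isPreconnected_Icc.intermediate_value hL2 hL1 hDc
        (show (1:ℝ) ∈ Icc (D xs) (D fb) from ⟨by rw [hDp]; exact hl.le, hc⟩)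
      exact hDne y hy hy1
    have hfbb : fb < f b := by nlinarith
    have hFI : ∀ x ∈ Icc fb b, f x ∈ Icc fb b := by
      intro x hx
      have h1 := hanti.antitoneOn (hUI hx) hbI hx.2
      have h2 := hanti.antitoneOn (hoc hfb) (hUI hx) hx.1
      rw [hffb] at h2
      exact ⟨by linarith, h2⟩
    obtain ⟨φ, ψ, h1, h2, h3, h4, h5, h6⟩ := lin_F fb b xs lam f (deriv f) hxsU hlam0
      (by nlinarith) hfxs hFI (hfc.mono hUI) (hanti.mono hUI) (fun x hx => hder x (hUo hx))
      (fun x hx => hfd x (hUo hx)) (hdc.mono hUo) hlam (hdd xs hxs) (by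
        intro x hx hxx
        rcases eq_or_lt_of_le hx.2 with h | h
        · subst h
          have := hanti.injOn (hUI (hFI x hx)) (hoc hfb) (hxx.trans hffb.symm)
          linarith
        · exact hfper2 x ⟨by linarith [hx.1, hfb.1], h⟩ hxx)
    refine ⟨φ, ψ, h1, h2, h3, h4, h6, fun x hx _ => h5 x hx, fun x hx t ht hxt => ?_⟩
    have hx' := Ioo_subset_Icc_self hx
    rw [← h5 x hx'] at hxt
    exact (smono_of fb b φ ψ h1 h2 h3).injOn (hFI x hx') (Ioo_subset_Icc_self ht) hxt.symm
  · -- repelling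
    have hD1 : 1 < D fb := by
      by_contra hc
      push Not at hc
      obtain ⟨y, hy, hy1⟩ := isPreconnected_Icc.intermediate_value hL1 hL2 hDc
        (show (1:ℝ) ∈ Icc (D fb) (D xs) from ⟨hc, by rw [hDp]; exact hl.le⟩)
      exact hDne y hy hy1
    have hfbb : f b < fb := by nlinarith
    set F := Function.invFunOn f (Ioo a b)
    have hlinv : ∀ x ∈ Ioo a b, F (f x) = x := fun x hx =>
      (hanti.injOn.mono hoc).leftInvOn_invFunOn hx
    have hF1 : ∀ y ∈ Icc fb b, F y ∈ Ico fb b ∧ f (F y) = y := by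
      intro y hy
      obtain ⟨x, hx, rfl⟩ := intermediate_value_Icc' (hxsU.1.trans hxsU.2).le (hfc.mono hUI)
        (show y ∈ Icc (f b) (f fb) from ⟨by linarith [hy.1], by rw [hffb]; exact hy.2⟩)
      have hxb : x < b := by
        refine lt_of_le_of_ne hx.2 ?_
        rintro rfl
        linarith [hy.1]
      have hxo : x ∈ Ioo a b := ⟨by linarith [hx.1, hfb.1], hxb⟩
      rw [hlinv x hxo]
      exact ⟨⟨hx.1, hxb⟩, rfl⟩
    have hFo : ∀ y ∈ Icc fb b, F y ∈ Ioo a b := fun y hy =>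
      ⟨by linarith [(hF1 y hy).1.1, hfb.1], (hF1 y hy).1.2⟩
    have hFd : ∀ y ∈ Icc fb b, HasDerivAt F (deriv f (F y))⁻¹ y := by
      intro y hy
      have i1 := hFo y hy
      have hs : HasStrictDerivAt f (deriv f (F y)) (F y) :=
        hasStrictDerivAt_of_hasDerivAt_of_continuousAt
          (by filter_upwards [isOpen_Ioo.mem_nhds i1] with x hx using hder x hx)
          (hdc.continuousAt (isOpen_Ioo.mem_nhds i1))
      have := hs.to_local_left_inverse (g := F) (hfd _ i1).ne
        (by filter_upwards [isOpen_Ioo.mem_nhds i1] with x hx using hlinv x hx)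
      rw [(hF1 y hy).2] at this
      exact this.hasDerivAt
    have hFc : ContinuousOn F (Icc fb b) := fun y hy =>
      (hFd y hy).continuousAt.continuousWithinAt
    have hFxs : F xs = xs := by
      have := hlinv xs hxs
      rwa [hfxs] at this
    have hxsI := Ioo_subset_Icc_self hxsU
    have hFI : ∀ y ∈ Icc fb b, F y ∈ Icc fb b := fun y hy => Ico_subset_Icc_self (hF1 y hy).1
    obtain ⟨φ, ψ, h1, h2, h3, h4, h5, h6⟩ := lin_F fb b xs lam⁻¹ F (fun y => (deriv f (F y))⁻¹)
      hxsU (inv_lt_zero.2 hlam0)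
      (by
        have h : lam < -1 := by nlinarith
        have h1 : lam * lam⁻¹ = 1 := mul_inv_cancel₀ hlam0.ne
        nlinarith [inv_lt_zero.2 hlam0])
      hFxs hFI hFc
      (by
        intro y hy y' hy' hyy
        by_contra hc
        push Not at hc
        have := hanti.antitoneOn (hoc (hFo y hy)) (hoc (hFo y' hy')) hc
        rw [(hF1 y hy).2, (hF1 y' hy').2] at this
        linarith)
      (fun x hx => hFd x (Ioo_subset_Icc_self hx))
      (fun x hx => inv_lt_zero.2 (hfd _ (hFo x (Ioo_subset_Icc_self hx))))
      ((hdc.comp (hFc.mono Ioo_subset_Icc_self) (fun x hx => hFo x (Ioo_subset_Icc_self hx))).inv₀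
        (fun x hx => (hfd _ (hFo x (Ioo_subset_Icc_self hx))).ne))
      (by simp only [hFxs, hlam])
      (by
        refine DifferentiableAt.inv ?_ (hfd _ (hFo xs hxsI)).ne
        refine DifferentiableAt.comp (g := deriv f) xs ?_ (hFd xs hxsI).differentiableAt
        rw [hFxs]
        exact hdd xs hxs)
      (by
        intro x hx hxx
        have i1 := (hF1 x hx).2
        have i2 := (hF1 (F x) (hFI x hx)).2
        have i3 := hFo (F x) (hFI x hx)
        rw [hxx] at i2 i3
        refine hfper2 x i3 ?_
        rw [i2, i1])
    refine ⟨φ, ψ, h1, h2, h3, h4, h6, fun x hx hfx => ?_, fun x hx t ht hxt => ?_⟩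
    · have hxb : x < b := by
        refine lt_of_le_of_ne hx.2 ?_
        rintro rfl
        linarith [hfx.1]
      have := h5 (f x) hfx
      rw [hlinv x ⟨by linarith [hx.1, hfb.1], hxb⟩] at this
      rw [this, mul_inv_cancel_left₀ hlam0.ne]
    · have ht' := Ioo_subset_Icc_self ht
      have := h5 t ht'
      rw [hxt, inv_mul_cancel_left₀ hlam0.ne] at this
      have h := (smono_of fb b φ ψ h1 h2 h3).injOn (hFI t ht') (Ioo_subset_Icc_self hx) this
      rw [← h]
      exact (hF1 t ht').2

end

/-- Matching points, decreasing case (Lemma 4.5).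
`fb` is the unique point of `(a,b)` mapped to `b` by `f` (i.e. `f⁻¹(b)`), and
`gd` is the unique point of `(c,d)` mapped to `d` by `g` (i.e. `g⁻¹(d)`). -/
theorem stmt7 (a b c d lam xs ys fb gd : ℝ) (f g : ℝ → ℝ)
    (hab : a < b) (hcd : c < d)
    (hf : ContDiffOn ℝ 2 f (Set.Icc a b))
    (hfd : ∀ x ∈ Set.Ioo a b, deriv f x < 0)
    (hbfa : b < f a)
    (hxs : xs ∈ Set.Ioo a b) (hfxs : f xs = xs)
    (hlam : deriv f xs = lam) (hlam1 : lam ≠ -1)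
    (hfper2 : ∀ x ∈ Set.Ioo a b, f (f x) = x → x = xs)
    (hg : ContDiffOn ℝ 2 g (Set.Icc c d))
    (hgd : ∀ y ∈ Set.Ioo c d, deriv g y < 0)
    (hdgc : d < g c)
    (hys : ys ∈ Set.Ioo c d) (hgys : g ys = ys)
    (hglam : deriv g ys = lam)
    (hgper2 : ∀ y ∈ Set.Ioo c d, g (g y) = y → y = ys)
    (hfb : fb ∈ Set.Ioo a b) (hffb : f fb = b)
    (hgd' : gd ∈ Set.Ioo c d) (hggd : g gd = d) :
    ∃ h : ℝ → ℝ, StrictMonoOn h (Set.Ioo fb b) ∧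
      IsDiffeoOn h (Set.Ioo fb b) (Set.Ioo gd d) ∧
      ConjRelOn h f g (Set.Ioo fb b) := by
  obtain ⟨hxU, φ, ψ, p1, p2, p3, p4, p5, p6, p7⟩ :=
    side a b lam xs fb f hf hfd hxs hfxs hlam hlam1 hfper2 hfb hffb
  obtain ⟨hyV, φ', ψ', q1, q2, q3, q4, q5, q6, q7⟩ :=
    side c d lam ys gd g hg hgd hys hgys hglam hlam1 hgper2 hgd' hggd
  have hpm := smono_of fb b φ ψ p1 p2 p3
  have hqm := smono_of gd d φ' ψ' q1 q2 q3
  have hfbb := hfb.2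
  have hgdd := hgd'.2
  obtain ⟨χ, x1, x2, x3⟩ := inv_of fb b φ ψ hfbb p1 p2 p3 p4
  obtain ⟨χ', y1, y2, y3⟩ := inv_of gd d φ' ψ' hgdd q1 q2 q3 q4
  have hfbI : fb ∈ Set.Icc fb b := ⟨le_rfl, hfbb.le⟩
  have hgdI : gd ∈ Set.Icc gd d := ⟨le_rfl, hgdd.le⟩
  have hφb : φ b = lam * φ fb := by
    have := p6 fb hfbI (by rw [hffb]; exact ⟨hfbb.le, le_rfl⟩)
    rwa [hffb] at this
  have hφd : φ' d = lam * φ' gd := by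
    have := q6 gd hgdI (by rw [hggd]; exact ⟨hgdd.le, le_rfl⟩)
    rwa [hggd] at this
  have hn1 : φ fb < 0 := by
    rw [← p5]; exact hpm hfbI (Set.Ioo_subset_Icc_self hxU) hxU.1
  have hn2 : φ' gd < 0 := by
    rw [← q5]; exact hqm hgdI (Set.Ioo_subset_Icc_self hyV) hyV.1
  obtain ⟨k, hk0, hk1⟩ : ∃ k : ℝ, 0 < k ∧ k * φ fb = φ' gd :=
    ⟨φ' gd / φ fb, div_pos_of_neg_of_neg hn2 hn1, div_mul_cancel₀ _ hn1.ne⟩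
  have hk2 : k * φ b = φ' d := by rw [hφb, hφd, ← hk1]; ring
  have m1 : ∀ x ∈ Set.Ioo fb b, k * φ x ∈ Set.Ioo (φ' gd) (φ' d) := by
    intro x hx
    have := (x2 x hx).1
    rw [← hk1, ← hk2]
    exact ⟨mul_lt_mul_of_pos_left this.1 hk0, mul_lt_mul_of_pos_left this.2 hk0⟩
  have m2 : ∀ y ∈ Set.Ioo gd d, k⁻¹ * φ' y ∈ Set.Ioo (φ fb) (φ b) := by
    intro y hy
    have := (y2 y hy).1
    rw [← hk1, ← hk2] at this
    constructor
    · rw [lt_inv_mul_iff₀ hk0]; exact this.1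
    · rw [inv_mul_lt_iff₀ hk0]; exact this.2
  have hl : ∀ x ∈ Set.Ioo fb b, χ (k⁻¹ * φ' (χ' (k * φ x))) = x := by
    intro x hx
    rw [(y1 _ (m1 x hx)).2, inv_mul_cancel_left₀ hk0.ne', (x2 x hx).2]
  have hr : ∀ y ∈ Set.Ioo gd d, χ' (k * φ (χ (k⁻¹ * φ' y))) = y := by
    intro y hy
    rw [(x1 _ (m2 y hy)).2, mul_inv_cancel_left₀ hk0.ne', (y2 y hy).2]
  have hM1 : Set.MapsTo (fun x => χ' (k * φ x)) (Set.Ioo fb b) (Set.Ioo gd d) :=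
    fun x hx => (y1 _ (m1 x hx)).1
  have hM2 : Set.MapsTo (fun y => χ (k⁻¹ * φ' y)) (Set.Ioo gd d) (Set.Ioo fb b) :=
    fun y hy => (x1 _ (m2 y hy)).1
  have hI : Set.InvOn (fun y => χ (k⁻¹ * φ' y)) (fun x => χ' (k * φ x)) (Set.Ioo fb b)
    (Set.Ioo gd d) := ⟨hl, hr⟩
  refine ⟨fun x => χ' (k * φ x), ?_, ⟨hI.bijOn hM1 hM2, ?_, fun y => χ (k⁻¹ * φ' y), hI, ?_⟩, ?_⟩
  · intro x hx x' hx' hxx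
    have h1 := hpm (Set.Ioo_subset_Icc_self hx) (Set.Ioo_subset_Icc_self hx') hxx
    have h2 := mul_lt_mul_of_pos_left h1 hk0
    rw [← (y1 _ (m1 x hx)).2, ← (y1 _ (m1 x' hx')).2] at h2
    exact (hqm.lt_iff_lt (Set.Ioo_subset_Icc_self (hM1 hx)) (Set.Ioo_subset_Icc_self (hM1 hx'))).1 h2
  · exact y3.comp (contDiffOn_const.mul (cd1_of _ isOpen_Ioo φ ψ p2 p4)) m1
  · exact x3.comp (contDiffOn_const.mul (cd1_of _ isOpen_Ioo φ' ψ' q2 q4)) m2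
  · intro x hx hfx
    refine (q7 _ (hM1 hx) _ (hM1 hfx) ?_).symm
    simp only
    rw [(y1 _ (m1 x hx)).2, (y1 _ (m1 _ hfx)).2,
      p6 x (Set.Ioo_subset_Icc_self hx) (Set.Ioo_subset_Icc_self hfx)]
    ring
end

section
/- Let f : (a,b) → ℝ be C² with f′ > 0 on (a,b), unique fixed point x* ∈ (a,b), and f′(x*) = λ ∈ (0,1). Let g : (−∞,d) → ℝ be C² with g′ > 0, unique fixed point y* < d, g′(y*) = λ, and g(y) → −∞ as y → −∞. Let c < y* and let h : (a,b) → (c,d) be an increasing C¹ diffeomorphism with h(f(x)) = g(h(x)) whenever x, f(x) ∈ (a,b) (so h(x*) = y*). Let K > 0 satisfy |f″(x)| ≤ K for all x ∈ (a,b) and |g″(y)| ≤ K for all y ∈ (c,d). Set r = λ(1−λ)/(10K) and suppose max(x* − a, b − x*) ≤ r. Set χ = (d − y*)/(b − x*) and suppose χ ≤ 3/2. Then for all x ∈ (a,b) with x ≠ x*, |(h(x) − y*)/(x − x*) − χ| < (3/(2r)) · (4|x − x*| + b − x*). -/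
theorem aux_taylor (lo hi x0 K lam : ℝ) (f : ℝ → ℝ)
    (hf : ContDiffOn ℝ 2 f (Set.Ioo lo hi)) (hx0 : x0 ∈ Set.Ioo lo hi)
    (hl : deriv f x0 = lam) (hK : ∀ x ∈ Set.Ioo lo hi, |deriv (deriv f) x| ≤ K) :
    ∀ x ∈ Set.Ioo lo hi, |f x - f x0 - lam * (x - x0)| ≤ K / 2 * (x - x0) ^ 2 := by
  have hd1 : ContDiffOn ℝ 1 (deriv f) (Set.Ioo lo hi) :=
    hf.deriv_of_isOpen isOpen_Ioo (by norm_num)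
  have hdf : ∀ t ∈ Set.Ioo lo hi, DifferentiableAt ℝ f t := fun t ht =>
    (hf.differentiableOn (by norm_num)).differentiableAt (isOpen_Ioo.mem_nhds ht)
  have hddf : ∀ t ∈ Set.Ioo lo hi, DifferentiableAt ℝ (deriv f) t := fun t ht =>
    (hd1.differentiableOn (by norm_num)).differentiableAt (isOpen_Ioo.mem_nhds ht)
  have hb : ∀ t ∈ Set.Ioo lo hi, |deriv f t - lam| ≤ K * |t - x0| := by
    intro t ht
    have := (convex_Ioo lo hi).norm_image_sub_le_of_norm_deriv_le (f := deriv f) (C := K)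
      hddf (by simpa [Real.norm_eq_abs] using hK) hx0 ht
    simpa [Real.norm_eq_abs, hl] using this
  set F : ℝ → ℝ := fun x => f x - f x0 - lam * (x - x0) with hF
  have hFd : ∀ t ∈ Set.Ioo lo hi, HasDerivAt F (deriv f t - lam) t := by
    intro t ht
    have h1 := ((hdf t ht).hasDerivAt.sub_const (f x0)).sub
      (((hasDerivAt_id t).sub_const x0).const_mul lam)
    exact h1.congr_deriv (by simp)
  have hGd : ∀ t : ℝ, HasDerivAt (fun x => (x - x0) ^ 2) (2 * (t - x0)) t := by
    intro t
    have h1 := ((hasDerivAt_id t).sub_const x0).pow 2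
    exact h1.congr_deriv (by simp)
  have key : ∀ ξ y : ℝ, ξ ∈ Set.Ioo lo hi → ξ ≠ x0 →
      y ^ 2 * (deriv f ξ - lam) = F (y + x0) * (2 * (ξ - x0)) → |F (y + x0)| ≤ K / 2 * y ^ 2 := by
    intro ξ y hξ hne h
    have h1 := hb ξ hξ
    have h2 : 0 < |ξ - x0| := abs_pos.2 (sub_ne_zero.2 hne)
    have h3 := congrArg abs h
    rw [abs_mul, abs_mul, abs_mul, abs_of_nonneg (sq_nonneg y), abs_of_pos (by norm_num : (0:ℝ) < 2)] at h3
    have h4 := mul_le_mul_of_nonneg_left h1 (sq_nonneg y)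
    rw [h3] at h4
    by_contra hc
    push Not at hc
    nlinarith
  have hF0 : F x0 = 0 := by simp [hF]
  intro x hx
  change |F x| ≤ _
  rcases lt_trichotomy x x0 with h | h | h
  · obtain ⟨ξ, hξ, e⟩ := exists_ratio_hasDerivAt_eq_ratio_slope F (fun t => deriv f t - lam) h
      (fun t ht => (hFd t ⟨hx.1.trans_le ht.1, ht.2.trans_lt hx0.2⟩).continuousAt.continuousWithinAt)
      (fun t ht => hFd t ⟨hx.1.trans ht.1, ht.2.trans hx0.2⟩)
      (fun x => (x - x0) ^ 2) (fun t => 2 * (t - x0))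
      (fun t ht => (hGd t).continuousAt.continuousWithinAt) (fun t _ => hGd t)
    have := key ξ (x - x0) ⟨hx.1.trans hξ.1, hξ.2.trans hx0.2⟩ hξ.2.ne
      (by rw [sub_add_cancel]; rw [hF0] at e; linarith)
    rwa [sub_add_cancel] at this
  · rw [h, hF0]; simp
  · obtain ⟨ξ, hξ, e⟩ := exists_ratio_hasDerivAt_eq_ratio_slope F (fun t => deriv f t - lam) h
      (fun t ht => (hFd t ⟨hx0.1.trans_le ht.1, ht.2.trans_lt hx.2⟩).continuousAt.continuousWithinAt)
      (fun t ht => hFd t ⟨hx0.1.trans ht.1, ht.2.trans hx.2⟩)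
      (fun x => (x - x0) ^ 2) (fun t => 2 * (t - x0))
      (fun t ht => (hGd t).continuousAt.continuousWithinAt) (fun t _ => hGd t)
    have := key ξ (x - x0) ⟨hx0.1.trans hξ.1, hξ.2.trans hx.2⟩ hξ.1.ne'
      (by rw [sub_add_cancel]; rw [hF0] at e; linarith)
    rwa [sub_add_cancel] at this

theorem aux_ratio (r lam u w : ℝ) (hr : 0 < r) (h0 : 0 < lam) (h1 : lam < 1)
    (hu : u ≠ 0) (hur : |u| ≤ 3 * r)
    (hw : |w - lam * u| ≤ lam * (1 - lam) / (20 * r) * u ^ 2) :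
    ∃ p, w = p * u ∧ 17 / 20 * lam ≤ p ∧ p ≤ 1 - 17 / 20 * (1 - lam) ∧
      |p - lam| ≤ lam * (1 - lam) / (20 * r) * |u| := by
  have hup := abs_pos.2 hu
  have hp : |w / u - lam| ≤ lam * (1 - lam) / (20 * r) * |u| := by
    have : w / u - lam = (w - lam * u) / u := by field_simp
    rw [this, abs_div, div_le_iff₀ hup]
    refine hw.trans (le_of_eq ?_)
    rw [mul_assoc, ← sq, sq_abs]
  have hpp : |w / u - lam| ≤ 3 / 20 * (lam * (1 - lam)) := by
    refine hp.trans ?_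
    have : lam * (1 - lam) / (20 * r) * |u| ≤ lam * (1 - lam) / (20 * r) * (3 * r) := by
      have : 0 < 1 - lam := by linarith
      gcongr
    refine this.trans (le_of_eq ?_)
    field_simp
  obtain ⟨ha, hb⟩ := abs_le.1 hpp
  refine ⟨w / u, by field_simp, ?_, ?_, hp⟩ <;> nlinarith

theorem aux_log (m p q : ℝ) (hm : 0 < m) (hp : m ≤ p) (hq : m ≤ q) :
    |Real.log p - Real.log q| ≤ |p - q| / m := by
  have key : ∀ p q : ℝ, m ≤ p → m ≤ q → Real.log p - Real.log q ≤ |p - q| / m := by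
    intro p q hp hq
    have hq0 := hm.trans_le hq
    have hp0 := hm.trans_le hp
    rw [← Real.log_div hp0.ne' hq0.ne']
    have h1 := Real.log_le_sub_one_of_pos (div_pos hp0 hq0)
    have h2 : p / q - 1 = (p - q) / q := by field_simp
    rw [h2] at h1
    refine h1.trans ?_
    refine (div_le_div_of_nonneg_right (le_abs_self _) hq0.le).trans ?_
    gcongr
  rw [abs_le]
  constructor
  · have := key q p hq hp
    rw [abs_sub_comm] at this
    linarith
  · exact key p q hp hq

theorem aux_step (r lam u v u' v' : ℝ) (hr : 0 < r) (h0 : 0 < lam) (h1 : lam < 1)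
    (huv : 0 < v / u) (hur : |u| ≤ r) (hvr : |v| ≤ 3 * r)
    (hu' : |u' - lam * u| ≤ lam * (1 - lam) / (20 * r) * u ^ 2)
    (hv' : |v' - lam * v| ≤ lam * (1 - lam) / (20 * r) * v ^ 2) :
    (∃ p, 0 < p ∧ p < 1 ∧ u' = p * u) ∧
    |u'| ≤ (1 - 17 / 20 * (1 - lam)) * |u| ∧ |v'| ≤ (1 - 17 / 20 * (1 - lam)) * |v| ∧
    |Real.log (v' / u') - Real.log (v / u)| ≤
      7 / 100 / r * (17 / 20 * (1 - lam)) * (|u| + |v|) := by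
  have hu : u ≠ 0 := by rintro rfl; simp at huv
  have hv : v ≠ 0 := by rintro rfl; simp at huv
  obtain ⟨p, rfl, hp1, hp2, hp3⟩ := aux_ratio r lam u u' hr h0 h1 hu (by linarith) hu'
  obtain ⟨q, rfl, hq1, hq2, hq3⟩ := aux_ratio r lam v v' hr h0 h1 hv hvr hv'
  have hp0 : 0 < p := by linarith
  have hq0 : 0 < q := by linarith
  refine ⟨⟨p, hp0, by linarith, rfl⟩, ?_, ?_, ?_⟩
  · rw [abs_mul, abs_of_pos hp0]; gcongr
  · rw [abs_mul, abs_of_pos hq0]; gcongr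
  · have e : q * v / (p * u) = q / p * (v / u) := by field_simp
    rw [e, Real.log_mul (div_pos hq0 hp0).ne' huv.ne', Real.log_div hq0.ne' hp0.ne', add_sub_cancel_right]
    refine (aux_log (17 / 20 * lam) q p (by positivity) hq1 hp1).trans ?_
    rw [div_le_iff₀ (by positivity)]
    have h3 : |q - p| ≤ lam * (1 - lam) / (20 * r) * (|u| + |v|) := by
      have : q - p = (q - lam) - (p - lam) := by ring
      rw [this]
      refine (abs_sub _ _).trans ?_
      linarith
    refine h3.trans ?_
    have hl : 0 < 1 - lam := by linarith
    have : 0 ≤ lam * (1 - lam) / r * (|u| + |v|) := by positivity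
    have e1 : lam * (1 - lam) / (20 * r) * (|u| + |v|) = 1 / 20 * (lam * (1 - lam) / r * (|u| + |v|)) := by
      field_simp
    have e2 : 7 / 100 / r * (17 / 20 * (1 - lam)) * (|u| + |v|) * (17 / 20 * lam)
      = 7 / 100 * (17 / 20) * (17 / 20) * (lam * (1 - lam) / r * (|u| + |v|)) := by
      field_simp
    rw [e1, e2]
    nlinarith

theorem aux_final (s q δ : ℝ) (hs : 0 < s) (hq : 0 < q)
    (h : |Real.log q - Real.log s| ≤ δ) : (1 - δ) * s ≤ q ∧ (1 - δ) * q ≤ s := by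
  have key : ∀ s q : ℝ, 0 < s → 0 < q → Real.log s - Real.log q ≤ δ → (1 - δ) * s ≤ q := by
    intro s q hs hq h
    rw [← Real.log_div hs.ne' hq.ne'] at h
    have h1 := Real.one_sub_inv_le_log_of_pos (div_pos hs hq)
    rw [inv_div] at h1
    have h2 : 1 - δ ≤ q / s := by linarith
    rwa [le_div_iff₀ hs] at h2
  obtain ⟨h1, h2⟩ := abs_le.1 h
  exact ⟨key s q hs hq (by linarith), key q s hq hs (by linarith)⟩

set_option maxHeartbeats 2000000 in
/-- A bound on the range of the conjugacy function (Lemma 4.6). -/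
theorem stmt8 (a b c d lam xs ys K r chi : ℝ) (f g h : ℝ → ℝ)
    (hab : a < b)
    (hf : ContDiffOn ℝ 2 f (Set.Ioo a b))
    (hfd : ∀ x ∈ Set.Ioo a b, 0 < deriv f x)
    (hxs : xs ∈ Set.Ioo a b) (hfxs : f xs = xs)
    (hfuniq : ∀ x ∈ Set.Ioo a b, f x = x → x = xs)
    (hlam : deriv f xs = lam) (hlam0 : 0 < lam) (hlam1 : lam < 1)
    (hg : ContDiffOn ℝ 2 g (Set.Iio d))
    (hgd : ∀ y < d, 0 < deriv g y)
    (hys : ys < d) (hgys : g ys = ys)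
    (hguniq : ∀ y < d, g y = y → y = ys)
    (hglam : deriv g ys = lam)
    (hgbot : Filter.Tendsto g Filter.atBot Filter.atBot)
    (hc : c < ys)
    (hmono : StrictMonoOn h (Set.Ioo a b))
    (hdiffeo : IsDiffeoOn h (Set.Ioo a b) (Set.Ioo c d))
    (hconj : ConjRelOn h f g (Set.Ioo a b))
    (hhxs : h xs = ys)
    (hK : 0 < K)
    (hKf : ∀ x ∈ Set.Ioo a b, |deriv (deriv f) x| ≤ K)
    (hKg : ∀ y ∈ Set.Ioo c d, |deriv (deriv g) y| ≤ K)
    (hr : r = lam * (1 - lam) / (10 * K))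
    (hsmall : max (xs - a) (b - xs) ≤ r)
    (hchi : chi = (d - ys) / (b - xs)) (hchi32 : chi ≤ 3 / 2) :
    ∀ x ∈ Set.Ioo a b, x ≠ xs →
      |(h x - ys) / (x - xs) - chi| < 3 / (2 * r) * (4 * |x - xs| + b - xs) := by
  have hl : 0 < 1 - lam := by linarith
  have hr0 : 0 < r := by rw [hr]; positivity
  have hK2 : K / 2 = lam * (1 - lam) / (20 * r) := by rw [hr]; field_simp; norm_num
  have hra : xs - a ≤ r := (le_max_left _ _).trans hsmall
  have hrb : b - xs ≤ r := (le_max_right _ _).trans hsmall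
  have hbx : 0 < b - xs := by linarith [hxs.2]
  have hdr : d - ys ≤ 3 / 2 * r := by
    rw [hchi, div_le_iff₀ hbx] at hchi32
    linarith
  obtain ⟨hbij, hC1, hinv, hInv, hC1i⟩ := hdiffeo
  have hysm : ys ∈ Set.Ioo c d := ⟨hc, hys⟩
  have hTf := aux_taylor a b xs K lam f hf hxs hlam hKf
  have hTg := aux_taylor c d ys K lam g (hg.mono Set.Ioo_subset_Iio_self) hysm hglam hKg
  rw [hK2, hfxs] at hTf
  rw [hK2, hgys] at hTg
  have hur : ∀ x ∈ Set.Ioo a b, |x - xs| ≤ r := by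
    intro x hx
    rw [abs_le]
    constructor <;> linarith [hx.1, hx.2]
  have hqpos : ∀ x ∈ Set.Ioo a b, x ≠ xs → 0 < (h x - ys) / (x - xs) := by
    intro x hx hne
    rcases lt_or_gt_of_ne hne with hlt | hgt
    · have := hmono hx hxs hlt
      exact div_pos_of_neg_of_neg (by linarith) (by linarith)
    · have := hmono hxs hx hgt
      exact div_pos (by linarith) (by linarith)
  -- derivative of h at xs
  have hhd : DifferentiableAt ℝ h xs :=
    (hC1.differentiableOn (by norm_num)).differentiableAt (isOpen_Ioo.mem_nhds hxs)
  have hid : DifferentiableAt ℝ hinv ys :=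
    (hC1i.differentiableOn (by norm_num)).differentiableAt (isOpen_Ioo.mem_nhds hysm)
  set s := deriv h xs with hs
  have hslope : Filter.Tendsto (fun x => (h x - ys) / (x - xs)) (nhdsWithin xs {xs}ᶜ) (nhds s) := by
    have := hasDerivAt_iff_tendsto_slope.1 hhd.hasDerivAt
    refine this.congr ?_
    intro x
    rw [slope_def_field, hhxs]
  have hsne : s ≠ 0 := by
    intro h0
    have h1 : HasDerivAt (fun x => hinv (h x)) (deriv hinv ys * s) xs := by
      have hid' : HasDerivAt hinv (deriv hinv ys) (h xs) := by rw [hhxs]; exact hid.hasDerivAt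
      exact hid'.comp xs hhd.hasDerivAt
    have h2 : HasDerivAt (fun x => hinv (h x)) 1 xs := by
      refine (hasDerivAt_id xs).congr_of_eventuallyEq ?_
      filter_upwards [isOpen_Ioo.mem_nhds hxs] with x hx
      exact hInv.1 hx
    have := h1.unique h2
    rw [h0, mul_zero] at this
    exact zero_ne_one this
  have hs0 : 0 < s := by
    refine lt_of_le_of_ne ?_ hsne.symm
    refine ge_of_tendsto hslope ?_
    filter_upwards [self_mem_nhdsWithin, mem_nhdsWithin_of_mem_nhds (isOpen_Ioo.mem_nhds hxs)]
      with x hx1 hx2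
    exact (hqpos x hx2 hx1).le
  set ρ := 1 - 17 / 20 * (1 - lam) with hρ
  have hρ0 : 0 < ρ := by rw [hρ]; linarith
  have hρ1 : ρ < 1 := by rw [hρ]; linarith
  -- main comparison
  have hmain : ∀ x ∈ Set.Ioo a b, x ≠ xs → |h x - ys| ≤ 3 * r →
      |Real.log ((h x - ys) / (x - xs)) - Real.log s| ≤
        7 / 100 / r * (|x - xs| + |h x - ys|) := by
    intro x hx hne hv
    set S := |x - xs| + |h x - ys| with hS
    have hind : ∀ n : ℕ, f^[n] x ∈ Set.Ioo a b ∧ f^[n] x ≠ xs ∧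
        |f^[n] x - xs| ≤ ρ ^ n * |x - xs| ∧ |h (f^[n] x) - ys| ≤ ρ ^ n * |h x - ys| ∧
        |Real.log ((h x - ys) / (x - xs)) -
          Real.log ((h (f^[n] x) - ys) / (f^[n] x - xs))| ≤ 7 / 100 / r * ((1 - ρ ^ n) * S) := by
      intro n
      induction n with
      | zero => simp [hx.1, hx.2, hne]
      | succ n ih =>
        obtain ⟨i1, i2, i3, i4, i5⟩ := ih
        rw [Function.iterate_succ_apply']
        set z := f^[n] x with hz
        have hρn : ρ ^ n ≤ 1 := pow_le_one₀ hρ0.le hρ1.le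
        have hρn0 : 0 < ρ ^ n := pow_pos hρ0 n
        have hvz : |h z - ys| ≤ 3 * r :=
          i4.trans ((mul_le_of_le_one_left (abs_nonneg _) hρn).trans hv)
        obtain ⟨⟨p, hp0, hp1, hp⟩, j1, j2, j3⟩ := aux_step r lam (z - xs) (h z - ys) (f z - xs)
          (g (h z) - ys) hr0 hlam0 hlam1 (hqpos z i1 i2) (hur z i1) hvz (hTf z i1)
          (hTg (h z) (hbij.mapsTo i1))
        have hfz : f z ∈ Set.Ioo a b := by
          have e : f z = p * z + (1 - p) * xs := by linarith
          rw [e]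
          constructor
          · nlinarith [mul_pos hp0 (sub_pos.2 i1.1), mul_pos (sub_pos.2 hp1) (sub_pos.2 hxs.1)]
          · nlinarith [mul_pos hp0 (sub_pos.2 i1.2), mul_pos (sub_pos.2 hp1) (sub_pos.2 hxs.2)]
        have hcz := hconj z i1 hfz
        rw [← hcz] at j2 j3
        refine ⟨hfz, ?_, ?_, ?_, ?_⟩
        · intro e
          rw [e, sub_self] at hp
          exact mul_ne_zero hp0.ne' (sub_ne_zero.2 i2) hp.symm
        · rw [pow_succ', mul_assoc]
          exact j1.trans (mul_le_mul_of_nonneg_left i3 hρ0.le)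
        · rw [pow_succ', mul_assoc]
          exact j2.trans (mul_le_mul_of_nonneg_left i4 hρ0.le)
        · have hSz : |z - xs| + |h z - ys| ≤ ρ ^ n * S := by rw [hS]; linarith
          have e : (17 / 20 * (1 - lam)) = 1 - ρ := by rw [hρ]; ring
          rw [e] at j3
          have j4 : 7 / 100 / r * (1 - ρ) * (|z - xs| + |h z - ys|) ≤
              7 / 100 / r * (1 - ρ) * (ρ ^ n * S) := by
            have : 0 < 1 - ρ := by linarith
            gcongr
          have j5 := abs_sub_le (Real.log ((h x - ys) / (x - xs)))
            (Real.log ((h z - ys) / (z - xs))) (Real.log ((h (f z) - ys) / (f z - xs)))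
          rw [abs_sub_comm (Real.log ((h z - ys) / (z - xs)))] at j5
          refine j5.trans ((add_le_add i5 (j3.trans j4)).trans (le_of_eq ?_))
          ring
    have hlim0 : Filter.Tendsto (fun n => f^[n] x) Filter.atTop (nhdsWithin xs {xs}ᶜ) := by
      refine tendsto_nhdsWithin_iff.2 ⟨?_, Filter.Eventually.of_forall fun n => (hind n).2.1⟩
      rw [tendsto_iff_dist_tendsto_zero]
      have : Filter.Tendsto (fun n => ρ ^ n * |x - xs|) Filter.atTop (nhds 0) := by
        simpa using (tendsto_pow_atTop_nhds_zero_of_lt_one hρ0.le hρ1).mul_const |x - xs|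
      refine squeeze_zero (fun _ => dist_nonneg) (fun n => ?_) this
      rw [Real.dist_eq]
      exact (hind n).2.2.1
    have hlim1 := (Filter.Tendsto.log (hslope.comp hlim0) hsne)
    refine le_of_tendsto (hlim1.const_sub _).abs (Filter.Eventually.of_forall fun n => ?_)
    refine (hind n).2.2.2.2.trans ?_
    have hS0 : 0 ≤ S := by positivity
    have : (1 - ρ ^ n) * S ≤ S := mul_le_of_le_one_left hS0 (by linarith [pow_pos hρ0 n])
    gcongr
  -- the limit at b
  have hlimb : Filter.Tendsto h (nhdsWithin b (Set.Iio b)) (nhds d) := by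
    have hmem : Set.Ioo a b ∈ nhdsWithin b (Set.Iio b) := Ioo_mem_nhdsLT hab
    refine tendsto_order.2 ⟨fun y hy => ?_, fun y hy => ?_⟩
    · obtain ⟨x0, hx0, e⟩ := hbij.surjOn (show max y ys ∈ Set.Ioo c d from
        ⟨lt_max_of_lt_right hc, max_lt hy hys⟩)
      filter_upwards [Ioo_mem_nhdsLT hx0.2] with x hx
      have := hmono hx0 ⟨hx0.1.trans hx.1, hx.2⟩ hx.1
      rw [e] at this
      exact (le_max_left _ _).trans_lt this
    · filter_upwards [hmem] with x hx
      exact (hbij.mapsTo hx).2.trans hy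
  have hlimid : Filter.Tendsto (fun x : ℝ => x - xs) (nhdsWithin b (Set.Iio b)) (nhds (b - xs)) :=
    (Filter.tendsto_id.mono_left nhdsWithin_le_nhds).sub_const xs
  have hlimq : Filter.Tendsto (fun x => (h x - ys) / (x - xs)) (nhdsWithin b (Set.Iio b))
      (nhds chi) := by
    rw [hchi]
    exact (hlimb.sub_const ys).div hlimid hbx.ne'
  have hev : ∀ᶠ x in nhdsWithin b (Set.Iio b), x ∈ Set.Ioo xs b := Ioo_mem_nhdsLT hxs.2
  have hvright : ∀ x ∈ Set.Ioo xs b, |h x - ys| ≤ 3 / 2 * r := by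
    intro x hx
    have hx' : x ∈ Set.Ioo a b := ⟨hxs.1.trans hx.1, hx.2⟩
    have h1 := hmono hxs hx' hx.1
    rw [abs_of_pos (by linarith)]
    linarith [(hbij.mapsTo hx').2]
  have hδ : ∀ u v k : ℝ, u ≤ r → v ≤ k * r → 7 / 100 / r * (u + v) ≤ 7 / 100 * (1 + k) := by
    intro u v k h1 h2
    have : u + v ≤ (1 + k) * r := by linarith
    calc 7 / 100 / r * (u + v) ≤ 7 / 100 / r * ((1 + k) * r) := by gcongr
      _ = _ := by field_simp
  have hsb : 33 / 40 * s ≤ 3 / 2 := by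
    refine le_trans ?_ hchi32
    refine ge_of_tendsto hlimq ?_
    filter_upwards [hev] with x hx
    have hx' : x ∈ Set.Ioo a b := ⟨hxs.1.trans hx.1, hx.2⟩
    have h1 := hvright x hx
    have h2 := hmain x hx' hx.1.ne' (by linarith)
    have h3 := h2.trans (hδ _ _ (3 / 2) (hur x hx') h1)
    have h4 := (aux_final s _ _ hs0 (hqpos x hx' hx.1.ne') h3).1
    refine le_trans (le_of_eq ?_) h4
    norm_num
  have hq3 : ∀ x ∈ Set.Ioo a b, x ≠ xs → |h x - ys| ≤ 3 * r →
      (h x - ys) / (x - xs) ≤ 5 / 2 + 1 / 20 := by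
    intro x hx hne hv
    have h3 := (hmain x hx hne hv).trans (hδ _ _ 3 (hur x hx) hv)
    have h4 := (aux_final s _ _ hs0 (hqpos x hx hne) h3).2
    linarith
  have hqabs : ∀ x ∈ Set.Ioo a b, x ≠ xs →
      |h x - ys| = (h x - ys) / (x - xs) * |x - xs| := by
    intro x hx hne
    have h1 := hqpos x hx hne
    have h2 : x - xs ≠ 0 := sub_ne_zero.2 hne
    rw [← abs_of_pos h1, ← abs_mul, div_mul_cancel₀ _ h2]
  have hv3 : ∀ x ∈ Set.Ioo a b, |h x - ys| ≤ 3 * r := by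
    intro x hx
    rcases lt_trichotomy x xs with hlt | heq | hgt
    · by_contra hcon
      push Not at hcon
      have h1 := hmono hx hxs hlt
      rw [hhxs] at h1
      rw [abs_of_neg (by linarith)] at hcon
      have hy : ys - 3 * r ∈ Set.Ioo c d :=
        ⟨by linarith [(hbij.mapsTo hx).1], by linarith⟩
      obtain ⟨z, hz, e⟩ := hbij.surjOn hy
      have hzne : z ≠ xs := by
        rintro rfl
        linarith
      have hzv : |h z - ys| = 3 * r := by
        rw [e, abs_of_neg (by linarith)]; ring
      have h2 := hq3 z hz hzne hzv.le
      have h3 := hqabs z hz hzne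
      have h4 := hur z hz
      have h5 := abs_nonneg (z - xs)
      nlinarith
    · rw [heq, hhxs]; simp; exact hr0.le
    · linarith [hvright x ⟨hgt, hx.2⟩]
  have hfin : ∀ x ∈ Set.Ioo a b, x ≠ xs →
      |(h x - ys) / (x - xs) - s| ≤ 3 / (2 * r) * |x - xs| := by
    intro x hx hne
    have h1 := hv3 x hx
    have h2 := hq3 x hx hne h1
    have h3 := hqabs x hx hne
    have h4 := hmain x hx hne h1
    have h5 := abs_nonneg (x - xs)
    have h6 : |h x - ys| ≤ 51 / 20 * |x - xs| := by rw [h3]; nlinarith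
    have hq0 := hqpos x hx hne
    set q := (h x - ys) / (x - xs)
    have h7 : |Real.log q - Real.log s| ≤ 1 / 4 * (|x - xs| / r) := by
      refine h4.trans ?_
      have h8 : |x - xs| + |h x - ys| ≤ 71 / 20 * |x - xs| := by linarith
      calc 7 / 100 / r * (|x - xs| + |h x - ys|) ≤ 7 / 100 / r * (71 / 20 * |x - xs|) := by gcongr
        _ = 497 / 2000 * (|x - xs| / r) := by field_simp; norm_num
        _ ≤ _ := mul_le_mul_of_nonneg_right (by norm_num) (by positivity)
    obtain ⟨k1, k2⟩ := aux_final s q _ hs0 hq0 h7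
    have e : 3 / (2 * r) * |x - xs| = 3 / 2 * (|x - xs| / r) := by field_simp
    rw [e]
    have hT : 0 ≤ |x - xs| / r := by positivity
    set T := |x - xs| / r
    rw [abs_le]
    constructor <;> nlinarith
  have hchis : |chi - s| ≤ 3 / (2 * r) * (b - xs) := by
    refine le_of_tendsto_of_tendsto (hlimq.sub_const s).abs (hlimid.const_mul (3 / (2 * r))) ?_
    filter_upwards [hev] with x hx
    have hx' : x ∈ Set.Ioo a b := ⟨hxs.1.trans hx.1, hx.2⟩
    have := hfin x hx' hx.1.ne'
    rwa [abs_of_pos (sub_pos.2 hx.1)] at this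
  intro x hx hne
  have h1 := hfin x hx hne
  have h2 := abs_sub_le ((h x - ys) / (x - xs)) s chi
  rw [abs_sub_comm s] at h2
  have h3 : 0 < 3 / (2 * r) * |x - xs| := mul_pos (by positivity) (abs_pos.2 (sub_ne_zero.2 hne))
  have e : 3 / (2 * r) * (4 * |x - xs| + b - xs) =
    4 * (3 / (2 * r) * |x - xs|) + 3 / (2 * r) * (b - xs) := by ring
  rw [e]
  linarith
end

section
/- Let (a,b) be an open interval containing 0 and let f : (a,b) → ℝ be C² with f′(x) > 0 for all x ∈ (a,b). Suppose 0 is the unique fixed point of f in (a,b) with f′(0) = λ ∈ (0,1). Let K > 0 satisfy |f″(x)| ≤ K for all x ∈ (a,b), set r = λ(1−λ)/(10K), and suppose max(|a|, b) ≤ r. Then: (a) for every u ∈ (a,b) and every integer n ≥ 0 such that the iterates u, f(u), …, fⁿ(u) all lie in (a,b), one has |fⁿ(u) − λⁿu| ≤ ((1 − λⁿ)λⁿ/(5r))·u²; and (b) for every v ∈ (a,b), every integer n ≥ 0, and every w ∈ (a,b) with fⁿ(w) = v (all intermediate iterates lying in (a,b)), one has |w − v/λⁿ| ≤ (2(1 −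 λⁿ)/(5λ²ⁿr))·v². -/
theorem quad_bound (a b lam K : ℝ) (f : ℝ → ℝ)
    (ha : a < 0) (hb : 0 < b)
    (hf : ContDiffOn ℝ 2 f (Set.Ioo a b)) (hfix : f 0 = 0)
    (hlam : deriv f 0 = lam) 
    (hKf : ∀ x ∈ Set.Ioo a b, |deriv (deriv f) x| ≤ K)
    (hK : 0 < K) :
    ∀ x ∈ Set.Ioo a b, |f x - lam * x| ≤ K * x ^ 2 := by
  have h0 : (0:ℝ) ∈ Set.Ioo a b := ⟨ha, hb⟩
  have hd : ∀ x ∈ Set.Ioo a b, DifferentiableAt ℝ f x := fun x hx =>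
    (hf.differentiableOn (by norm_num)).differentiableAt (isOpen_Ioo.mem_nhds hx)
  have hd2 : ∀ x ∈ Set.Ioo a b, DifferentiableAt ℝ (deriv f) x := fun x hx =>
    (((contDiffOn_succ_iff_deriv_of_isOpen (n := 1) isOpen_Ioo).1
      (by simpa [one_add_one_eq_two] using hf)).2.2.differentiableOn
      (by norm_num)).differentiableAt (isOpen_Ioo.mem_nhds hx)
  have h1 : ∀ x ∈ Set.Ioo a b, |deriv f x - lam| ≤ K * |x| := by
    intro x hx
    have := (convex_Ioo a b).norm_image_sub_le_of_norm_deriv_le (f := deriv f) (C := K)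
      hd2 hKf h0 hx
    simpa [hlam] using this
  intro x hx
  have hg : ∀ y ∈ Set.Ioo a b, HasDerivAt (fun y => f y - lam * y) (deriv f y - lam) y := by
    intro y hy
    have := (hd y hy).hasDerivAt.sub ((hasDerivAt_id y).const_mul lam)
    rw [mul_one] at this
    exact this
  have hc : Convex ℝ (Set.Icc (-|x|) |x| ∩ Set.Ioo a b) := (convex_Icc _ _).inter (convex_Ioo a b)
  have := hc.norm_image_sub_le_of_norm_deriv_le (f := fun y => f y - lam * y) (C := K * |x|)
    (x := 0) (y := x)
    (fun y hy => (hg y hy.2).differentiableAt)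
    (fun y hy => by
      rw [(hg y hy.2).deriv]
      refine (h1 y hy.2).trans ?_
      have := abs_le.2 hy.1
      gcongr)
    ⟨⟨by simp, by simp⟩, h0⟩ ⟨⟨neg_abs_le x, le_abs_self x⟩, hx⟩
  simp only [hfix, Real.norm_eq_abs, mul_zero, sub_zero] at this
  rw [← sq_abs x]
  linarith

/-- Lemma A.1: iterate bounds near a stable fixed point. -/
theorem stmt19 (a b lam K r : ℝ) (f : ℝ → ℝ)
    (ha : a < 0) (hb : 0 < b)
    (hf : ContDiffOn ℝ 2 f (Set.Ioo a b))
    (hfd : ∀ x ∈ Set.Ioo a b, 0 < deriv f x)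
    (hfix : f 0 = 0)
    (huniq : ∀ x ∈ Set.Ioo a b, f x = x → x = 0)
    (hlam : deriv f 0 = lam) (hlam0 : 0 < lam) (hlam1 : lam < 1)
    (hK : 0 < K) (hKf : ∀ x ∈ Set.Ioo a b, |deriv (deriv f) x| ≤ K)
    (hr : r = lam * (1 - lam) / (10 * K))
    (hab : max |a| b ≤ r) :
    (∀ u ∈ Set.Ioo a b, ∀ n : ℕ, (∀ k ≤ n, f^[k] u ∈ Set.Ioo a b) →
      |f^[n] u - lam ^ n * u| ≤ (1 - lam ^ n) * lam ^ n / (5 * r) * u ^ 2) ∧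
    (∀ v ∈ Set.Ioo a b, ∀ n : ℕ, ∀ w ∈ Set.Ioo a b, f^[n] w = v →
      (∀ k ≤ n, f^[k] w ∈ Set.Ioo a b) →
      |w - v / lam ^ n| ≤ 2 * (1 - lam ^ n) / (5 * lam ^ (2 * n) * r) * v ^ 2) := by
  have hquad := quad_bound a b lam K f ha hb hf hfix hlam hKf hK
  have hrpos : 0 < r := by
    rw [hr]; have : 0 < 1 - lam := by linarith
    positivity
  obtain ⟨q, hq⟩ : ∃ q, q = 1 / (5 * r) := ⟨_, rfl⟩
  have hq0 : 0 < q := by rw [hq]; positivity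
  have hqr : q * r = 1 / 5 := by rw [hq]; field_simp
  have hKq : K = lam * (1 - lam) * q / 2 := by
    have h2 : r * (10 * K) = lam * (1 - lam) := by rw [hr]; field_simp
    have : q * (r * (10 * K)) = 2 * K := by rw [← mul_assoc, hqr]; ring
    rw [h2] at this; linarith
  have hur : ∀ u ∈ Set.Ioo a b, q * |u| ≤ 1 / 5 := by
    intro u hu
    have h1 : |u| ≤ r := by
      have h3 := le_max_left |a| b
      have h4 := le_max_right |a| b
      have h5 := neg_abs_le a
      exact abs_le.2 ⟨by linarith [hu.1], by linarith [hu.2]⟩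
    rw [← hqr]; gcongr
  have hP : ∀ n : ℕ, 0 < lam ^ n ∧ lam ^ n ≤ 1 := fun n =>
    ⟨by positivity, pow_le_one₀ hlam0.le hlam1.le⟩
  have hsm : ∀ u ∈ Set.Ioo a b, ∀ n : ℕ,
      (1 - lam ^ n) * lam ^ n * q * u ^ 2 ≤ lam ^ n * |u| / 5 := by
    intro u hu n
    obtain ⟨h1, h2⟩ := hP n
    calc (1 - lam ^ n) * lam ^ n * q * u ^ 2
        = (1 - lam ^ n) * (lam ^ n * |u| * (q * |u|)) := by rw [← sq_abs u]; ring
      _ ≤ 1 * (lam ^ n * |u| * (1 / 5)) := by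
          have := hur u hu
          gcongr
          linarith
      _ = _ := by ring
  have hA : ∀ u ∈ Set.Ioo a b, ∀ n : ℕ, (∀ k ≤ n, f^[k] u ∈ Set.Ioo a b) →
      |f^[n] u - lam ^ n * u| ≤ (1 - lam ^ n) * lam ^ n * q * u ^ 2 := by
    intro u hu n
    induction n with
    | zero => intro _; simp
    | succ n ih =>
      intro h
      have ih := ih (fun k hk => h k (by omega))
      have hx := hquad _ (h n (by omega))
      rw [Function.iterate_succ_apply']
      have hs := hsm u hu n
      obtain ⟨hp, hp1⟩ := hP n
      generalize f^[n] u = x at *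
      rw [pow_succ]
      generalize lam ^ n = P at *
      have hxb : |x| ≤ 6 / 5 * (P * |u|) := by
        have h1 : |x| ≤ |x - P * u| + |P * u| := by
          simpa using abs_add_le (x - P * u) (P * u)
        rw [abs_mul, abs_of_pos hp] at h1
        linarith
      have hx2 : x ^ 2 ≤ 36 / 25 * (P ^ 2 * u ^ 2) := by
        rw [← sq_abs x, ← sq_abs u]
        calc |x| ^ 2 ≤ (6 / 5 * (P * |u|)) ^ 2 := by gcongr
          _ = _ := by ring
      have h1 : |f x - P * lam * u| ≤ |f x - lam * x| + lam * |x - P * u| := by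
        have := abs_add_le (f x - lam * x) (lam * (x - P * u))
        rw [abs_mul, abs_of_pos hlam0] at this
        have e : f x - P * lam * u = f x - lam * x + lam * (x - P * u) := by ring
        rw [e]; exact this
      have h2 : K * x ^ 2 ≤ K * (36 / 25 * (P ^ 2 * u ^ 2)) := by gcongr
      have h3 := mul_le_mul_of_nonneg_left ih hlam0.le
      have h4 : 0 ≤ lam * (1 - lam) * q * (P ^ 2 * u ^ 2) := by
        have : 0 < 1 - lam := by linarith
        positivity
      rw [hKq] at h2 hx
      nlinarith
  refine ⟨?_, ?_⟩
  · intro u hu n h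
    refine (hA u hu n h).trans (le_of_eq ?_)
    rw [hq]; ring
  · intro v hv n w hw hwv h
    have h1 := hA w hw n h
    have hs := hsm w hw n
    rw [hwv] at h1
    rw [mul_comm 2 n, pow_mul]
    obtain ⟨hp, hp1⟩ := hP n
    generalize lam ^ n = P at *
    have h2 : P * |w| * (4 / 5) ≤ |v| := by
      have h3 : |P * w| ≤ |v - P * w| + |v| := by
        have := abs_sub_le (P * w) v 0
        rw [abs_sub_comm (P * w) v] at this
        simpa using this
      rw [abs_mul, abs_of_pos hp] at h3
      linarith
    have h3 : P ^ 2 * w ^ 2 ≤ 2 * v ^ 2 := by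
      have : (P * |w| * (4 / 5)) ^ 2 ≤ |v| ^ 2 := by gcongr
      rw [sq_abs] at this
      have h5 : (P * |w| * (4 / 5)) ^ 2 = P ^ 2 * w ^ 2 * (16 / 25) := by
        rw [← sq_abs w]; ring
      nlinarith [sq_nonneg v]
    have h4 : |w - v / P| = |v - P * w| / P := by
      rw [abs_sub_comm v, ← abs_of_pos hp, ← abs_div, abs_of_pos hp]
      congr 1; field_simp
    have h5 : 2 * (1 - P) / (5 * P ^ 2 * r) * v ^ 2 = (1 - P) * q * (2 * v ^ 2) / P ^ 2 := by
      rw [hq]; field_simp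
    rw [h4, h5, div_le_div_iff₀ hp (by positivity)]
    have h6 : 0 ≤ 1 - P := by linarith
    calc |v - P * w| * P ^ 2 ≤ (1 - P) * P * q * w ^ 2 * P ^ 2 := by gcongr
      _ = (1 - P) * q * (P ^ 2 * w ^ 2) * P := by ring
      _ ≤ _ := by gcongr
end
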